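/- arXiv:2210.17458 — 2 statements merged into one kernel-verified Lean document; each statement's English description precedes it below -/
import Mathlib

section
/- Let Ω = B(0,R)∖B(0,R/K) with K > 1, and let ω ∈ L^∞(ℝ²) be supported in Ω and 2π/N-periodic in the angular variable (i.e. ω(r, α + 2π/N) = ω(r, α) in polar coordinates). Then the radial velocity satisfies ‖v_r[ω]‖_{L^∞(Ω)} ≤ C_K · R · ‖ω‖_{L^∞} · N^{−1} log N for N ≥ 2, where C_K depends only on K. -/
open MeasureTheory Real
open scoped RealInnerProductSpace

/-- The rotation by 90 degrees: `(a,b)^⊥ = (-b,a)`. -/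
noncomputable def perp (x : EuclideanSpace ℝ (Fin 2)) : EuclideanSpace ℝ (Fin 2) :=
  (WithLp.equiv 2 (Fin 2 → ℝ)).symm ![-x 1, x 0]

/-- Rotation of the plane by angle `θ`. -/
noncomputable def rot (θ : ℝ) (x : EuclideanSpace ℝ (Fin 2)) : EuclideanSpace ℝ (Fin 2) :=
  (WithLp.equiv 2 (Fin 2 → ℝ)).symm
    ![Real.cos θ * x 0 - Real.sin θ * x 1, Real.sin θ * x 0 + Real.cos θ * x 1]

/-- The 2D Biot–Savart velocity `v[ω](x) = ∫ (x−y)^⊥ ω(y)/|x−y|² dy`. -/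
noncomputable def biotSavart (ω : EuclideanSpace ℝ (Fin 2) → ℝ)
    (x : EuclideanSpace ℝ (Fin 2)) : EuclideanSpace ℝ (Fin 2) :=
  ∫ y, (ω y / ‖x - y‖ ^ 2) • perp (x - y)

/-- The radial component `v_r[ω](x) = x̂ · v[ω](x)`. -/
noncomputable def vrad (ω : EuclideanSpace ℝ (Fin 2) → ℝ)
    (x : EuclideanSpace ℝ (Fin 2)) : ℝ :=
  ⟪‖x‖⁻¹ • x, biotSavart ω x⟫

/-!
In complex notation, substituting `y = x u` turns the radial velocity into
`v_r[ω](x) = |x| ∫ ω(x u) Im (1 - u)⁻¹ du`. Averaging over the rotations by multiples of `2π / N`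
leaves `ω` unchanged and replaces `(1 - u)⁻¹` by `(1 - u ^ N)⁻¹`. For `u = exp (s + iβ)` the
imaginary part of the latter is at most `h(N s) g(N β)`, with `h` and `g` integrable and `h`
decaying exponentially: splitting the singularity into two inverse square roots is what avoids the
logarithm. Since `|x u| |ω(x u)| ≤ R M` takes care of one factor `|u|` of the area element
`|u|² ds dβ`, and the decay of `h` takes care of the other as soon as `N ≥ 2`, the integral over `s`
gains the factor `1 / N`.
-/

section Averaging

lemma integral_birkhoffAverage {α E : Type*} [MeasurableSpace α] [NormedAddCommGroup E]
    [NormedSpace ℝ E] {μ : Measure α} {T : α → α} (hT : MeasurePreserving T μ μ) {f : α → E}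
    (hf : Integrable f μ) {N : ℕ} (hN : N ≠ 0) :
    ∫ x, birkhoffAverage ℝ T f N x ∂μ = ∫ x, f x ∂μ := by
  have hTk (k : ℕ) : ∫ x, f (T^[k] x) ∂μ = ∫ x, f x ∂μ := by
    have hk := hT.iterate k
    rw [← integral_map hk.aemeasurable (hk.map_eq.symm ▸ hf.aestronglyMeasurable), hk.map_eq]
  simp only [birkhoffAverage, birkhoffSum]
  have hint (k : ℕ) : Integrable (fun x => f (T^[k] x)) μ :=
    (hT.iterate k).integrable_comp_of_integrable hf
  rw [integral_smul, integral_finsetSum _ fun k _ => hint k]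
  simp only [hTk, Finset.sum_const, Finset.card_range, ← Nat.cast_smul_eq_nsmul ℝ]
  rw [inv_smul_smul₀ (Nat.cast_ne_zero.2 hN)]

lemma sum_range_pow_mul_eq_ite {F : Type*} [Field F] {N : ℕ} {ζ : F} (hζ : IsPrimitiveRoot ζ N)
    {k : ℕ} (hk : k < N) : ∑ j ∈ Finset.range N, (ζ ^ j) ^ k = if k = 0 then (N : F) else 0 := by
  simp_rw [pow_right_comm ζ _ k]
  split_ifs with h
  · simp [h]
  · rw [geom_sum_eq (hζ.pow_ne_one_of_pos_of_lt h hk), pow_right_comm, hζ.pow_eq_one, one_pow,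
      sub_self, zero_div]

lemma sum_inv_one_sub_pow_mul {F : Type*} [Field F] {N : ℕ} {ζ : F} (hζ : IsPrimitiveRoot ζ N)
    {u : F} (hu : u ^ N ≠ 1) :
    ∑ j ∈ Finset.range N, (1 - ζ ^ j * u)⁻¹ = N * (1 - u ^ N)⁻¹ := by
  have hu' : 1 - u ^ N ≠ 0 := sub_ne_zero.2 hu.symm
  have expand (j : ℕ) :
      (1 - ζ ^ j * u)⁻¹ = (∑ k ∈ Finset.range N, (ζ ^ j) ^ k * u ^ k) * (1 - u ^ N)⁻¹ := by
    have geom := mul_neg_geom_sum (ζ ^ j * u) N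
    rw [mul_pow, pow_right_comm, hζ.pow_eq_one, one_pow, one_mul] at geom
    simp only [mul_pow] at geom
    rw [eq_mul_inv_iff_mul_eq₀ hu', ← geom, inv_mul_cancel_left₀]
    exact left_ne_zero_of_mul (geom ▸ hu')
  simp_rw [expand, ← Finset.sum_mul]
  congr 1
  rw [Finset.sum_comm]
  simp_rw [← Finset.sum_mul]
  rw [Finset.sum_congr rfl fun k hk => by
    rw [sum_range_pow_mul_eq_ite hζ (Finset.mem_range.1 hk)]]
  rcases N.eq_zero_or_pos with rfl | hN
  · simp
  · simp [Finset.sum_ite_eq', hN]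

lemma birkhoffAverage_mul_im_inv_one_sub {N : ℕ} (hN : N ≠ 0) {ζ : ℂ} (hζ : IsPrimitiveRoot ζ N)
    {W : ℂ → ℝ} (hW : ∀ w, W (ζ * w) = W w) {u : ℂ} (hu : u ^ N ≠ 1) :
    birkhoffAverage ℝ (ζ * ·) (fun w => W w * ((1 - w)⁻¹).im) N u =
      W u * ((1 - u ^ N)⁻¹).im := by
  have hWj (j : ℕ) : W (ζ ^ j * u) = W u := by
    induction j with
    | zero => simp
    | succ j ih => rw [pow_succ', mul_assoc, hW, ih]
  have hsum := congrArg Complex.im (sum_inv_one_sub_pow_mul hζ hu)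
  rw [Complex.im_sum, ← Complex.ofReal_natCast, Complex.im_ofReal_mul] at hsum
  simp only [birkhoffAverage, birkhoffSum, mul_left_iterate, hWj, ← Finset.mul_sum, hsum]
  rw [mul_left_comm, smul_eq_mul, inv_mul_cancel_left₀ (Nat.cast_ne_zero.2 hN)]

end Averaging

section ChangeOfVariables

variable {E : Type*} [NormedAddCommGroup E]

lemma measurePreserving_mul_left_of_norm_eq_one {c : ℂ} (hc : ‖c‖ = 1) :
    MeasurePreserving (fun w : ℂ => c * w) :=
  (rotation ⟨c, mem_sphere_zero_iff_norm.2 hc⟩).measurePreserving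

lemma integrable_comp_mul_left_complex {f : ℂ → E} (hf : Integrable f) {z : ℂ} (hz : z ≠ 0) :
    Integrable fun w => f (z * w) := by
  have hr : ‖z‖ ≠ 0 := norm_ne_zero_iff.2 hz
  have hc : ‖z / ‖z‖‖ = 1 := by simp [hr]
  refine ((measurePreserving_mul_left_of_norm_eq_one hc).integrable_comp_of_integrable
    ((integrable_comp_smul_iff volume f hr).2 hf)).congr (.of_forall fun w => ?_)
  rw [Function.comp_apply, Complex.real_smul, ← mul_assoc,
    mul_div_cancel₀ _ (Complex.ofReal_ne_zero.2 hr)]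

lemma integral_comp_mul_left_complex [NormedSpace ℝ E] (f : ℂ → E) {z : ℂ} (hz : z ≠ 0) :
    ∫ w, f w = ‖z‖ ^ 2 • ∫ w, f (z * w) := by
  have hr : ‖z‖ ≠ 0 := norm_ne_zero_iff.2 hz
  let c : Circle := ⟨z / ‖z‖, mem_sphere_zero_iff_norm.2 (by simp [hr])⟩
  have hmul (w : ℂ) : z * w = ‖z‖ • rotation c w := by
    rw [rotation_apply, Complex.real_smul, ← mul_assoc,
      mul_div_cancel₀ _ (Complex.ofReal_ne_zero.2 hr)]
  simp_rw [hmul]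
  rw [(rotation c).measurePreserving.integral_comp
      (rotation c).toHomeomorph.measurableEmbedding fun w => f (‖z‖ • w),
    Measure.integral_comp_smul, Complex.finrank_real_complex, abs_of_nonneg (by positivity),
    smul_inv_smul₀ (by positivity)]

lemma integrableOn_Ioi_inv_mul_comp_log {F : ℝ → ℝ} (hF : Integrable F) :
    IntegrableOn (fun ρ => ρ⁻¹ * F (log ρ)) (Set.Ioi 0) := by
  rw [← range_exp, ← Set.image_univ, integrableOn_image_iff_integrableOn_abs_deriv_smul .univ
    (fun s _ => (hasDerivAt_exp s).hasDerivWithinAt) exp_injective.injOn]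
  simpa using hF

lemma integral_Ioi_inv_mul_comp_log (F : ℝ → ℝ) :
    ∫ ρ in Set.Ioi 0, ρ⁻¹ * F (log ρ) = ∫ s, F s := by
  rw [← range_exp, ← Set.image_univ, integral_image_eq_integral_abs_deriv_smul .univ
    (fun s _ => (hasDerivAt_exp s).hasDerivWithinAt) exp_injective.injOn]
  simp

lemma ae_comp_log {p : ℝ → Prop} (hp : ∀ᵐ s, p s) :
    ∀ᵐ ρ ∂volume.restrict (Set.Ioi 0), p (log ρ) := by
  rw [ae_restrict_iff' measurableSet_Ioi, ae_iff]
  refine measure_mono_null (fun ρ hρ => ?_)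
    (addHaar_image_eq_zero_of_differentiableOn_of_addHaar_eq_zero volume
      differentiable_exp.differentiableOn (ae_iff.1 hp))
  obtain ⟨hρ0, hρp⟩ := Classical.not_imp.1 hρ
  exact ⟨log ρ, hρp, exp_log hρ0⟩

lemma norm_integral_le_of_logPolar_le [NormedSpace ℝ E] {f : ℂ → E} {F G : ℝ → ℝ}
    (hF : Integrable F) (hG : IntegrableOn G (Set.Ioo (-π) π))
    (h : ∀ᵐ s : ℝ, ∀ β : ℝ,
      exp s ^ 2 * ‖f (Complex.exp (s + β * Complex.I))‖ ≤ F s * G β) :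
    ‖∫ w, f w‖ ≤ (∫ s, F s) * ∫ β in Set.Ioo (-π) π, G β := by
  have hpolar {ρ : ℝ} (hρ : 0 < ρ) (β : ℝ) :
      Complex.polarCoord.symm (ρ, β) = Complex.exp (log ρ + β * Complex.I) := by
    rw [Complex.exp_add, ← Complex.ofReal_exp, exp_log hρ, Complex.exp_mul_I,
      Complex.polarCoord_symm_apply, Complex.ofReal_cos, Complex.ofReal_sin]
  rw [← Complex.integral_comp_polarCoord_symm, polarCoord_target, Measure.volume_eq_prod,
    ← Measure.prod_restrict, ← integral_Ioi_inv_mul_comp_log F, ← integral_prod_mul]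
  refine norm_integral_le_of_norm_le ((integrableOn_Ioi_inv_mul_comp_log hF).mul_prod hG) ?_
  filter_upwards [Measure.quasiMeasurePreserving_fst.ae (ae_comp_log h),
    Measure.quasiMeasurePreserving_fst.ae (ae_restrict_mem measurableSet_Ioi)] with ⟨ρ, β⟩ hle hρ
  replace hρ : 0 < ρ := hρ
  have hle := hle β
  rw [exp_log hρ] at hle
  rw [norm_smul, norm_of_nonneg hρ.le, hpolar hρ, mul_assoc, ← div_eq_inv_mul, le_div_iff₀ hρ]
  linarith

lemma integrable_of_even {f : ℝ → E} (heven : ∀ x, f (-x) = f x)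
    (hf : IntegrableOn f (Set.Ioi 0)) : Integrable f := by
  have hneg : IntegrableOn f (Set.Iic 0) := by
    rw [← neg_zero, ← integrableOn_Ici_iff_integrableOn_Ioi] at hf
    simpa only [heven] using hf.comp_neg_Iic
  rw [← integrableOn_univ, ← Set.Iic_union_Ioi (a := (0 : ℝ))]
  exact hneg.union hf

lemma intervalIntegrable_comp_natCast_mul {f : ℝ → E} (hf : ∀ a b, IntervalIntegrable f volume a b)
    (N : ℕ) (a b : ℝ) : IntervalIntegrable (fun x => f (N * x)) volume a b := by
  rcases eq_or_ne (N : ℝ) 0 with hN | hN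
  · simp [hN]
  · simpa [hN] using (hf (N * a) (N * b)).comp_mul_left (c := (N : ℝ))

lemma integral_comp_natCast_mul_of_periodic [NormedSpace ℝ E] {f : ℝ → E} {T : ℝ}
    (hf : Function.Periodic f T) (hint : ∀ a b, IntervalIntegrable f volume a b)
    {N : ℕ} (hN : N ≠ 0) (a : ℝ) :
    ∫ x in a..a + T, f (N * x) = ∫ x in a..a + T, f x := by
  have hN' : (N : ℝ) ≠ 0 := Nat.cast_ne_zero.2 hN
  rw [intervalIntegral.integral_comp_mul_left _ hN',
    show (N : ℝ) * (a + T) = N * a + (N : ℤ) • T by simp; ring,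
    hf.intervalIntegral_add_zsmul_eq _ _ hint, hf.intervalIntegral_add_eq _ a,
    natCast_zsmul, ← Nat.cast_smul_eq_nsmul ℝ, inv_smul_smul₀ hN']

end ChangeOfVariables

section Kernel

lemma normSq_one_sub_exp (τ φ : ℝ) :
    Complex.normSq (1 - Complex.exp (τ + φ * Complex.I)) =
      4 * exp τ * (sinh (τ / 2) ^ 2 + sin (φ / 2) ^ 2) := by
  have hsinh : 4 * exp τ * sinh (τ / 2) ^ 2 = (exp τ - 1) ^ 2 := by
    have hexp : exp τ = exp (τ / 2) ^ 2 := by rw [← exp_nat_mul]; congr 1; push_cast; ring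
    rw [sinh_eq, exp_neg, hexp]
    field_simp
    ring
  have hsin : 2 * sin (φ / 2) ^ 2 = 1 - cos φ := by
    rw [sin_sq_eq_half_sub, mul_div_cancel₀ φ two_ne_zero]; ring
  simp only [Complex.normSq_apply, Complex.sub_re, Complex.sub_im, Complex.one_re, Complex.one_im,
    Complex.exp_re, Complex.exp_im, Complex.add_re, Complex.add_im, Complex.ofReal_re,
    Complex.ofReal_im, Complex.re_ofReal_mul, Complex.im_ofReal_mul, Complex.I_re, Complex.I_im,
    mul_zero, mul_one, add_zero, zero_add]
  linear_combination exp τ ^ 2 * sin_sq_add_cos_sq φ - hsinh - 2 * exp τ * hsin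

lemma im_inv_one_sub_exp (τ φ : ℝ) :
    ((1 - Complex.exp (τ + φ * Complex.I))⁻¹).im =
      sin φ / (4 * (sinh (τ / 2) ^ 2 + sin (φ / 2) ^ 2)) := by
  have him : (1 - Complex.exp (τ + φ * Complex.I)).im = -(exp τ * sin φ) := by
    simp [Complex.exp_im]
  rw [Complex.inv_im, normSq_one_sub_exp, him, neg_neg, mul_comm (4 : ℝ), mul_assoc,
    mul_div_mul_left _ _ (exp_pos τ).ne']

lemma abs_sin_le_two_mul_abs_sin_half (φ : ℝ) : |sin φ| ≤ 2 * |sin (φ / 2)| := by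
  conv_lhs => rw [← mul_div_cancel₀ φ two_ne_zero, sin_two_mul, abs_mul, abs_mul, abs_two]
  exact mul_le_of_le_one_right (by positivity) (abs_cos_le_one _)

lemma div_sq_add_sq_le {a b c : ℝ} (ha : 0 < a) (hb : 0 < b) (hb1 : b ≤ 1) (hc : 0 < c)
    (hca : c ^ 2 ≤ 1 + a ^ 2) : b / (a ^ 2 + b ^ 2) ≤ (√(a * c ^ 3))⁻¹ * (√b)⁻¹ := by
  set X := a ^ 2 + b ^ 2
  have hXpos : 0 < X := by positivity
  have haX : a ≤ √X := le_sqrt_of_sq_le (by linarith [sq_nonneg b])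
  have hbcX : b * c ≤ √X := by
    refine le_sqrt_of_sq_le ?_
    calc (b * c) ^ 2 ≤ b ^ 2 * (1 + a ^ 2) := by rw [mul_pow]; gcongr
      _ ≤ X := by nlinarith [sq_nonneg a, mul_le_one₀ hb1 hb.le hb1]
  have hsqrt : b * √(a * c ^ 3 * b) ≤ X := by
    calc b * √(a * c ^ 3 * b) = √(b ^ 2) * √(a * c ^ 3 * b) := by rw [sqrt_sq hb.le]
      _ = √(a * (b * c) ^ 3) := by rw [← sqrt_mul (sq_nonneg b)]; ring_nf
      _ ≤ √(√X * √X ^ 3) := by gcongr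
      _ = √(X ^ 2) := by rw [← pow_succ', show 3 + 1 = 2 * 2 from rfl, pow_mul, sq_sqrt hXpos.le]
      _ = X := sqrt_sq hXpos.le
  rw [← mul_inv, ← sqrt_mul (by positivity), ← one_div,
    div_le_div_iff₀ hXpos (sqrt_pos.2 (by positivity)), one_mul]
  exact hsqrt

/-- The radial factor in the bound for `Im (1 - exp (τ + iφ))⁻¹`: an integrable singularity at
`τ = 0`, where the value is the junk value `0`, and exponential decay at rate `a`. -/
noncomputable def radialMajorant (a τ : ℝ) : ℝ := 2 * (√|τ|)⁻¹ * exp (-(a * |τ|))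

/-- The angular factor in the bound for `Im (1 - exp (τ + iφ))⁻¹`, with integrable singularities at
the multiples of `2π`, where the value is the junk value `0`. -/
noncomputable def angularMajorant (φ : ℝ) : ℝ := (√|sin (φ / 2)|)⁻¹

lemma radialMajorant_nonneg (a τ : ℝ) : 0 ≤ radialMajorant a τ := by
  unfold radialMajorant; positivity

lemma angularMajorant_nonneg (φ : ℝ) : 0 ≤ angularMajorant φ := by
  unfold angularMajorant; positivity

lemma inv_sqrt_abs_sinh_mul_cosh_pow_le {τ : ℝ} (hτ : τ ≠ 0) :
    (√(|sinh (τ / 2)| * cosh (τ / 2) ^ 3))⁻¹ ≤ 2 * radialMajorant (3 / 4) τ := by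
  have hpos : 0 < |τ| := abs_pos.2 hτ
  have hsinh : |τ| / 2 ≤ |sinh (τ / 2)| := by
    rw [abs_sinh, abs_div, abs_two]
    exact self_le_sinh_iff.2 (by positivity)
  have hcosh : exp (|τ| / 2) / 2 ≤ cosh (τ / 2) := by
    rw [← cosh_abs, abs_div, abs_two, cosh_eq]
    linarith [exp_pos (-(|τ| / 2))]
  have hexp : |τ| / 2 * (exp (|τ| / 2) / 2) ^ 3 = |τ| * (exp (3 / 4 * |τ|) / 4) ^ 2 := by
    rw [div_pow, div_pow, ← exp_nat_mul, ← exp_nat_mul]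
    ring_nf
  calc (√(|sinh (τ / 2)| * cosh (τ / 2) ^ 3))⁻¹
      ≤ (√(|τ| / 2 * (exp (|τ| / 2) / 2) ^ 3))⁻¹ := by gcongr
    _ = 2 * radialMajorant (3 / 4) τ := by
        rw [hexp, sqrt_mul hpos.le, sqrt_sq (by positivity), radialMajorant, exp_neg]
        field_simp
        norm_num

lemma abs_im_inv_one_sub_exp_le {τ : ℝ} (hτ : τ ≠ 0) (φ : ℝ) :
    |((1 - Complex.exp (τ + φ * Complex.I))⁻¹).im| ≤
      radialMajorant (3 / 4) τ * angularMajorant φ := by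
  have hφ := abs_sin_le_two_mul_abs_sin_half φ
  have hsinh : 0 < |sinh (τ / 2)| := abs_pos.2 (sinh_ne_zero.2 (div_ne_zero hτ two_ne_zero))
  have hca : cosh (τ / 2) ^ 2 ≤ 1 + |sinh (τ / 2)| ^ 2 := by rw [sq_abs, cosh_sq']
  rw [im_inv_one_sub_exp, abs_div, abs_of_nonneg (by positivity : 0 ≤ 4 * (_ : ℝ))]
  rcases (abs_nonneg (sin (φ / 2))).eq_or_lt with hb | hb
  · rw [← hb, mul_zero] at hφ
    rw [hφ.antisymm (abs_nonneg _), zero_div]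
    exact mul_nonneg (radialMajorant_nonneg _ _) (angularMajorant_nonneg _)
  calc |sin φ| / (4 * (sinh (τ / 2) ^ 2 + sin (φ / 2) ^ 2))
      ≤ 2 * |sin (φ / 2)| / (4 * (sinh (τ / 2) ^ 2 + sin (φ / 2) ^ 2)) := by gcongr
    _ = 1 / 2 * (|sin (φ / 2)| / (|sinh (τ / 2)| ^ 2 + |sin (φ / 2)| ^ 2)) := by
        rw [sq_abs, sq_abs, mul_div_mul_comm]; norm_num
    _ ≤ 1 / 2 * ((√(|sinh (τ / 2)| * cosh (τ / 2) ^ 3))⁻¹ * (√|sin (φ / 2)|)⁻¹) := by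
        gcongr
        exact div_sq_add_sq_le hsinh hb (abs_sin_le_one _) (cosh_pos _) hca
    _ ≤ 1 / 2 * (2 * radialMajorant (3 / 4) τ * angularMajorant φ) := by
        exact mul_le_mul_of_nonneg_left (mul_le_mul_of_nonneg_right
          (inv_sqrt_abs_sinh_mul_cosh_pow_le hτ) (angularMajorant_nonneg φ)) (by norm_num)
    _ = radialMajorant (3 / 4) τ * angularMajorant φ := by ring

lemma integrable_radialMajorant {a : ℝ} (ha : 0 < a) : Integrable (radialMajorant a) := by
  refine integrable_of_even (fun τ => by rw [radialMajorant, radialMajorant, abs_neg]) ?_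
  have hgamma : IntegrableOn (fun τ : ℝ => τ ^ (-(1 / 2) : ℝ) * exp (-a * τ ^ (1 : ℝ)))
      (Set.Ioi 0) := integrableOn_rpow_mul_exp_neg_mul_rpow (by norm_num) one_pos ha
  refine IntegrableOn.congr_fun (hgamma.const_mul 2) (fun τ hτ => ?_) measurableSet_Ioi
  simp only [radialMajorant, abs_of_pos (Set.mem_Ioi.1 hτ), rpow_neg (le_of_lt hτ), sqrt_eq_rpow,
    rpow_one, neg_mul, mul_assoc]

lemma exp_mul_radialMajorant_le {a b x τ : ℝ} (hx : x ≤ (a - b) * |τ|) :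
    exp x * radialMajorant a τ ≤ radialMajorant b τ := by
  rw [radialMajorant, radialMajorant, mul_left_comm, ← exp_add]
  gcongr
  linarith

lemma periodic_angularMajorant : Function.Periodic angularMajorant (2 * π) := by
  intro φ
  rw [angularMajorant, angularMajorant, add_div, mul_div_cancel_left₀ π two_ne_zero, sin_add_pi,
    abs_neg]

lemma angularMajorant_neg (φ : ℝ) : angularMajorant (-φ) = angularMajorant φ := by
  rw [angularMajorant, angularMajorant, neg_div, sin_neg, abs_neg]

lemma angularMajorant_le {φ : ℝ} (hφ : φ ∈ Set.Ioc 0 π) :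
    angularMajorant φ ≤ √π * φ ^ (-(1 / 2) : ℝ) := by
  obtain ⟨h0, hπ⟩ := hφ
  have hsin : φ / π ≤ |sin (φ / 2)| := by
    rw [abs_of_nonneg (sin_nonneg_of_nonneg_of_le_pi (by positivity) (by linarith))]
    convert mul_le_sin (x := φ / 2) (by positivity) (by linarith) using 1
    field_simp
  calc angularMajorant φ ≤ (√(φ / π))⁻¹ := by unfold angularMajorant; gcongr
    _ = √π * φ ^ (-(1 / 2) : ℝ) := by
        rw [sqrt_div h0.le, inv_div, rpow_neg h0.le, ← sqrt_eq_rpow, div_eq_mul_inv]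

lemma intervalIntegrable_angularMajorant (a b : ℝ) :
    IntervalIntegrable angularMajorant volume a b := by
  have hmeas : Measurable angularMajorant := by unfold angularMajorant; fun_prop
  have hpos : IntervalIntegrable angularMajorant volume 0 π := by
    refine ((intervalIntegral.intervalIntegrable_rpow' (r := -(1 / 2)) (by norm_num)).const_mul
      (√π)).mono_fun' hmeas.aestronglyMeasurable ?_
    rw [Set.uIoc_of_le pi_pos.le]
    filter_upwards [ae_restrict_mem measurableSet_Ioc] with φ hφ
    rw [norm_of_nonneg (angularMajorant_nonneg φ)]
    exact angularMajorant_le hφ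
  have hneg : IntervalIntegrable angularMajorant volume (-π) 0 := by
    simpa [angularMajorant_neg, div_neg] using (hpos.comp_mul_left (c := -1)).symm
  refine periodic_angularMajorant.intervalIntegrable two_pi_pos.ne' (t := -π) ?_ a b
  rw [show -π + 2 * π = π by ring]
  exact hneg.trans hpos

end Kernel

section ComplexEstimate

/-- The constant of the bound `|v_r[ω](x)| ≤ vradConst * A / N` for an `N`-fold symmetric `ω` with
`|y| |ω(y)| ≤ A`. The exponent `1 / 4` is the decay left after the kernel majorant, of exponent
`3 / 4` in `N log |u|`, has absorbed a factor `|u|`. -/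
noncomputable def vradConst : ℝ :=
  (∫ τ, radialMajorant (1 / 4) τ) * ∫ φ in (-π)..π, angularMajorant φ

lemma vradConst_nonneg : 0 ≤ vradConst :=
  mul_nonneg (integral_nonneg (radialMajorant_nonneg _)) <|
    intervalIntegral.integral_nonneg (by linarith [pi_pos]) fun φ _ => angularMajorant_nonneg φ

variable {N : ℕ} {W : ℂ → ℝ} {A : ℝ}

lemma abs_birkhoffAverage_exp_le (hN : 2 ≤ N) {ζ : ℂ} (hζ : IsPrimitiveRoot ζ N)
    (hW : ∀ w, W (ζ * w) = W w) (hA : ∀ w, ‖w‖ * |W w| ≤ A) {s : ℝ} (hs : s ≠ 0) (β : ℝ) :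
    exp s ^ 2 * |birkhoffAverage ℝ (ζ * ·) (fun w => W w * ((1 - w)⁻¹).im) N
        (Complex.exp (s + β * Complex.I))| ≤
      A * radialMajorant (1 / 4) (N * s) * angularMajorant (N * β) := by
  have hN0 : N ≠ 0 := by lia
  have hNs : N * s ≠ 0 := mul_ne_zero (Nat.cast_ne_zero.2 hN0) hs
  set u := Complex.exp (s + β * Complex.I) with hu
  have hnorm : ‖u‖ = exp s := by simp [hu, Complex.norm_exp]
  have hpow : u ^ N = Complex.exp ((N * s : ℝ) + (N * β : ℝ) * Complex.I) := by
    rw [hu, ← Complex.exp_nat_mul]; congr 1; push_cast; ring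
  have hpow_ne : u ^ N ≠ 1 := fun h => hNs <| by
    simpa [hpow, Complex.norm_exp] using congrArg norm h
  have habsorb : exp s * radialMajorant (3 / 4) (N * s) ≤ radialMajorant (1 / 4) (N * s) := by
    refine exp_mul_radialMajorant_le ?_
    have hN2 : (2 : ℝ) ≤ N := Nat.ofNat_le_cast.2 hN
    rw [abs_mul, Nat.abs_cast]
    nlinarith [le_abs_self s, abs_nonneg s]
  have hA0 : 0 ≤ A := by simpa using hA 0
  rw [birkhoffAverage_mul_im_inv_one_sub hN0 hζ hW hpow_ne, hpow, abs_mul]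
  calc exp s ^ 2 * (|W u| * |((1 - Complex.exp ((N * s : ℝ) + (N * β : ℝ) * Complex.I))⁻¹).im|)
      ≤ exp s ^ 2 * (|W u| * (radialMajorant (3 / 4) (N * s) * angularMajorant (N * β))) := by
        gcongr
        exact abs_im_inv_one_sub_exp_le hNs _
    _ = ‖u‖ * |W u| * (exp s * radialMajorant (3 / 4) (N * s)) * angularMajorant (N * β) := by
        rw [hnorm]; ring
    _ ≤ A * radialMajorant (1 / 4) (N * s) * angularMajorant (N * β) :=
        mul_le_mul_of_nonneg_right (mul_le_mul (hA u) habsorb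
          (mul_nonneg (exp_pos s).le (radialMajorant_nonneg _ _)) hA0) (angularMajorant_nonneg _)

lemma abs_integral_mul_im_inv_one_sub_le (hN : 2 ≤ N) {ζ : ℂ} (hζ : IsPrimitiveRoot ζ N)
    (hW : ∀ w, W (ζ * w) = W w) (hA : ∀ w, ‖w‖ * |W w| ≤ A)
    (hint : Integrable fun w => W w * ((1 - w)⁻¹).im) :
    |∫ w, W w * ((1 - w)⁻¹).im| ≤ vradConst * A / N := by
  have hN0 : N ≠ 0 := by lia
  have hNR : (N : ℝ) ≠ 0 := Nat.cast_ne_zero.2 hN0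
  have hradial : Integrable fun s => A * radialMajorant (1 / 4) (N * s) :=
    ((integrable_radialMajorant (by norm_num)).comp_mul_left' hNR).const_mul A
  have hangular : IntegrableOn (fun β => angularMajorant (N * β)) (Set.Ioo (-π) π) :=
    (intervalIntegrable_iff_integrableOn_Ioo_of_le (by linarith [pi_pos])).1 <|
      intervalIntegrable_comp_natCast_mul intervalIntegrable_angularMajorant N _ _
  have hradial_eq : ∫ s, A * radialMajorant (1 / 4) (N * s) =
      A * ((N : ℝ)⁻¹ * ∫ τ, radialMajorant (1 / 4) τ) := by
    rw [integral_const_mul, Measure.integral_comp_mul_left, abs_of_nonneg (by positivity),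
      smul_eq_mul]
  have hangular_eq : ∫ β in Set.Ioo (-π) π, angularMajorant (N * β) =
      ∫ φ in (-π)..π, angularMajorant φ := by
    have hperiod := integral_comp_natCast_mul_of_periodic periodic_angularMajorant
      intervalIntegrable_angularMajorant hN0 (-π)
    rw [show -π + 2 * π = π by ring] at hperiod
    rw [← hperiod, intervalIntegral.integral_of_le (by linarith [pi_pos]),
      integral_Ioc_eq_integral_Ioo]
  have hrot := measurePreserving_mul_left_of_norm_eq_one (hζ.norm'_eq_one hN0)
  rw [← integral_birkhoffAverage hrot hint hN0]
  refine (norm_integral_le_of_logPolar_le (E := ℝ) hradial hangular ?_).trans_eq ?_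
  · filter_upwards [Measure.ae_ne volume 0] with s hs β
    exact abs_birkhoffAverage_exp_le hN hζ hW hA hs β
  · rw [hradial_eq, hangular_eq, vradConst]
    ring

end ComplexEstimate

section RadialVelocity

/-- The isometric identification of the complex numbers with the Euclidean plane, through
which `rot` becomes multiplication by a unit complex number. -/
noncomputable def toPlane : ℂ ≃ₗᵢ[ℝ] EuclideanSpace ℝ (Fin 2) :=
  Complex.orthonormalBasisOneI.repr

lemma toPlane_apply_zero (w : ℂ) : toPlane w 0 = w.re := by simp [toPlane]

lemma toPlane_apply_one (w : ℂ) : toPlane w 1 = w.im := by simp [toPlane]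

lemma rot_toPlane (θ : ℝ) (w : ℂ) :
    rot θ (toPlane w) = toPlane (Complex.exp (θ * Complex.I) * w) := by
  ext i
  fin_cases i
  · simp [rot, toPlane_apply_zero, toPlane_apply_one, Complex.exp_ofReal_mul_I_re,
      Complex.exp_ofReal_mul_I_im]
  · simp [rot, toPlane_apply_zero, toPlane_apply_one, Complex.exp_ofReal_mul_I_re,
      Complex.exp_ofReal_mul_I_im, add_comm]

lemma inner_toPlane_perp (z w : ℂ) :
    ⟪toPlane z, perp (toPlane w)⟫ = (z * starRingEnd ℂ w).im := by
  simp only [PiLp.inner_apply, Fin.sum_univ_two, perp, WithLp.equiv_symm_apply]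
  simp [toPlane_apply_zero, toPlane_apply_one]
  ring

lemma inner_biotSavart_kernel {z : ℂ} (hz : z ≠ 0) (u : ℂ) (a : ℝ) :
    ⟪‖toPlane z‖⁻¹ • toPlane z, (a / ‖toPlane z - toPlane (z * u)‖ ^ 2) •
        perp (toPlane z - toPlane (z * u))⟫ = ‖z‖⁻¹ * (a * ((1 - u)⁻¹).im) := by
  have hr : ‖z‖ ≠ 0 := norm_ne_zero_iff.2 hz
  have him : (z * starRingEnd ℂ (z * (1 - u))).im = ‖z‖ ^ 2 * -(1 - u).im := by
    rw [map_mul, ← mul_assoc, Complex.mul_conj, Complex.im_ofReal_mul, Complex.conj_im,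
      Complex.normSq_eq_norm_sq]
  rw [← map_sub, show z - z * u = z * (1 - u) by ring, LinearIsometryEquiv.norm_map,
    LinearIsometryEquiv.norm_map, real_inner_smul_left, real_inner_smul_right, inner_toPlane_perp,
    him, Complex.inv_im, Complex.normSq_eq_norm_sq, norm_mul, mul_pow, div_mul_eq_mul_div,
    mul_left_comm a, mul_div_mul_left _ _ (pow_ne_zero 2 hr), mul_div_assoc]

variable {ω : EuclideanSpace ℝ (Fin 2) → ℝ}

lemma integrable_vrad_kernel {z : ℂ} (hz : z ≠ 0)
    (hint : Integrable fun y => (ω y / ‖toPlane z - y‖ ^ 2) • perp (toPlane z - y)) :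
    Integrable fun u => ω (toPlane (z * u)) * ((1 - u)⁻¹).im := by
  have hinner := toPlane.measurePreserving.integrable_comp_of_integrable
    (hint.const_inner (𝕜 := ℝ) (‖toPlane z‖⁻¹ • toPlane z))
  have hscaled := integrable_comp_mul_left_complex hinner hz
  simp only [Function.comp_apply, inner_biotSavart_kernel hz] at hscaled
  exact (integrable_const_mul_iff (IsUnit.mk0 _ (inv_ne_zero (norm_ne_zero_iff.2 hz))) _).1 hscaled

lemma vrad_toPlane {z : ℂ} (hz : z ≠ 0)
    (hint : Integrable fun y => (ω y / ‖toPlane z - y‖ ^ 2) • perp (toPlane z - y)) :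
    vrad ω (toPlane z) = ‖z‖ * ∫ u, ω (toPlane (z * u)) * ((1 - u)⁻¹).im := by
  have hr : ‖z‖ ≠ 0 := norm_ne_zero_iff.2 hz
  rw [vrad, biotSavart, ← integral_inner hint, ← toPlane.measurePreserving.integral_comp
    toPlane.toHomeomorph.measurableEmbedding, integral_comp_mul_left_complex _ hz]
  simp only [inner_biotSavart_kernel hz]
  rw [integral_const_mul, smul_eq_mul, sq, mul_assoc, mul_inv_cancel_left₀ hr]

lemma vrad_zero : vrad ω 0 = 0 := by rw [vrad, smul_zero, inner_zero_left]

theorem abs_vrad_le_of_norm_mul_abs_le {N : ℕ} (hN : 2 ≤ N) {A : ℝ}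
    (hA : ∀ y, ‖y‖ * |ω y| ≤ A) (hper : ∀ y, ω (rot (2 * π / N) y) = ω y)
    {x : EuclideanSpace ℝ (Fin 2)}
    (hint : Integrable fun y => (ω y / ‖x - y‖ ^ 2) • perp (x - y)) :
    |vrad ω x| ≤ vradConst * A / N := by
  obtain ⟨z, rfl⟩ := toPlane.surjective x
  rcases eq_or_ne z 0 with rfl | hz
  · have hA0 : 0 ≤ A := by simpa using hA 0
    rw [map_zero, vrad_zero, abs_zero]
    exact div_nonneg (mul_nonneg vradConst_nonneg hA0) N.cast_nonneg
  have hr : 0 < ‖z‖ := norm_pos_iff.2 hz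
  have hζ : IsPrimitiveRoot (Complex.exp ((2 * π / N : ℝ) * Complex.I)) N := by
    convert Complex.isPrimitiveRoot_exp N (by lia) using 2
    push_cast
    ring
  have hsym (u : ℂ) : ω (toPlane (z * (Complex.exp ((2 * π / N : ℝ) * Complex.I) * u))) =
      ω (toPlane (z * u)) := by
    rw [mul_left_comm, ← rot_toPlane, hper]
  have hweight (u : ℂ) : ‖u‖ * |ω (toPlane (z * u))| ≤ A / ‖z‖ := by
    have hzu := hA (toPlane (z * u))
    rw [LinearIsometryEquiv.norm_map, norm_mul] at hzu
    rw [le_div_iff₀ hr]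
    linarith
  rw [vrad_toPlane hz hint, abs_mul, abs_norm]
  calc ‖z‖ * |∫ u, ω (toPlane (z * u)) * ((1 - u)⁻¹).im|
      ≤ ‖z‖ * (vradConst * (A / ‖z‖) / N) := by
        gcongr
        exact abs_integral_mul_im_inv_one_sub_le hN hζ hsym hweight (integrable_vrad_kernel hz hint)
    _ = vradConst * A / N := by field_simp

lemma vrad_eq_zero_of_not_integrable {x : EuclideanSpace ℝ (Fin 2)}
    (hint : ¬Integrable fun y => (ω y / ‖x - y‖ ^ 2) • perp (x - y)) : vrad ω x = 0 := by
  rw [vrad, biotSavart, integral_undef hint, inner_zero_right]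

end RadialVelocity

theorem vrad_Linf_of_angular_periodic_general :
    ∃ C : ℝ, 0 < C ∧
      ∀ (ω : EuclideanSpace ℝ (Fin 2) → ℝ) (R M : ℝ) (N : ℕ),
        0 ≤ R → 2 ≤ N →
        Function.support ω ⊆ Metric.ball 0 R →
        (∀ x, |ω x| ≤ M) →
        (∀ x, ω (rot (2 * π / N) x) = ω x) →
        ∀ x, |vrad ω x| ≤ C * R * M / N := by
  refine ⟨vradConst + 1, by linarith [vradConst_nonneg], fun ω R M N hR hN hsupp hM hper x => ?_⟩
  have hRM : 0 ≤ R * M := mul_nonneg hR ((abs_nonneg _).trans (hM 0))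
  have hweight (y : EuclideanSpace ℝ (Fin 2)) : ‖y‖ * |ω y| ≤ R * M := by
    rcases eq_or_ne (ω y) 0 with hy | hy
    · simpa [hy] using hRM
    · exact mul_le_mul (mem_ball_zero_iff.1 (hsupp hy)).le (hM y) (abs_nonneg _) hR
  have hvrad : |vrad ω x| ≤ vradConst * (R * M) / N := by
    by_cases hint : Integrable fun y => (ω y / ‖x - y‖ ^ 2) • perp (x - y)
    · exact abs_vrad_le_of_norm_mul_abs_le hN hweight hper hint
    · rw [vrad_eq_zero_of_not_integrable hint, abs_zero]
      exact div_nonneg (mul_nonneg vradConst_nonneg hRM) N.cast_nonneg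
  calc |vrad ω x| ≤ vradConst * (R * M) / N := hvrad
    _ ≤ (vradConst + 1) * (R * M) / N := by gcongr; linarith
    _ = (vradConst + 1) * R * M / N := by ring

/-- For `ω ∈ L^∞` supported in `B(0,R) \ B(0,R/K)` and `2π/N`-periodic in the angle,
`‖v_r[ω]‖_{L^∞(Ω)} ≤ C_K R ‖ω‖_{L^∞} N⁻¹ log N`. -/
theorem vrad_Linf_of_angular_periodic (K : ℝ) (hK : 1 < K) :
    ∃ C : ℝ, 0 < C ∧
      ∀ (ω : EuclideanSpace ℝ (Fin 2) → ℝ) (R M : ℝ) (N : ℕ),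
        0 < R → 0 ≤ M → 2 ≤ N →
        Function.support ω ⊆ Metric.ball 0 R \ Metric.ball 0 (R / K) →
        (∀ x, |ω x| ≤ M) →
        (∀ x, ω (rot (2 * π / N) x) = ω x) →
        ∀ x ∈ Metric.ball (0 : EuclideanSpace ℝ (Fin 2)) R \ Metric.ball 0 (R / K),
          |vrad ω x| ≤ C * R * M * Real.log N / N := by
  obtain ⟨C, hC, hvrad⟩ := vrad_Linf_of_angular_periodic_general
  have hlog2 : 0 < Real.log 2 := log_pos one_lt_two
  refine ⟨C / Real.log 2, by positivity, fun ω R M N hR hM hN hsupp hb hper x _ => ?_⟩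
  have hlogN : 1 ≤ Real.log N / Real.log 2 :=
    (one_le_div hlog2).2 (log_le_log two_pos (Nat.ofNat_le_cast.2 hN))
  calc |vrad ω x|
      ≤ C * R * M / N := hvrad ω R M N hR.le hN (hsupp.trans Set.sdiff_subset) hb hper x
    _ ≤ C * R * M / N * (Real.log N / Real.log 2) := le_mul_of_one_le_right (by positivity) hlogN
    _ = C / Real.log 2 * R * M * Real.log N / N := by ring
end

section
/- Let ε ∈ (0,1), δ ∈ (0,ε), and f ∈ C²([1/2,4]) with f' > 0 on [1/2,4]. There exist constants C, K₀ ≥ 1 such that for every g ∈ C²_c((1/2,4)), every K ≥ K₀, every N ∈ ℕ, and every f_err ∈ C¹([1/2,4]) with ‖f_err‖_{C¹} ≤ K^{1−ε}, the function ω_K(r,α) := g(r)cos(Nα − K f(r) + f_err(r)) (viewed as a function on ℝ² in polar coordinates) satisfies ‖ω_K‖_{Ḣ^{−δ}(ℝ²)} ≤ C K^{−δ} ‖g‖_{C¹}. -/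
open MeasureTheory Real

/-- The normalizing constant `γ(δ) = π 2^δ Γ(δ/2)/Γ(1−δ/2)` of the Riesz potential. -/
noncomputable def rieszGamma (δ : ℝ) : ℝ :=
  π * 2 ^ δ * Real.Gamma (δ / 2) / Real.Gamma (1 - δ / 2)

/-- The Riesz potential `Λ^{−δ} h (x) = γ(δ)⁻¹ ∫ h(y)/|x−y|^{2−δ} dy` on `ℝ²`. -/
noncomputable def rieszPot (δ : ℝ) (h : EuclideanSpace ℝ (Fin 2) → ℝ)
    (x : EuclideanSpace ℝ (Fin 2)) : ℝ :=
  (rieszGamma δ)⁻¹ * ∫ y, h y / ‖x - y‖ ^ (2 - δ)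

/-- The polar angle of a point of `ℝ²`. -/
noncomputable def polarAngle (x : EuclideanSpace ℝ (Fin 2)) : ℝ :=
  Complex.arg (x 0 + x 1 * Complex.I)

/-!
Split the Riesz kernel `ρ ^ (-(2 - δ))` at scale `1/K` into the smooth kernel
`(ρ² + K⁻²) ^ (-(2 - δ) / 2)` and an error. The error is concentrated in `ρ ≲ 1/K` and has `L¹` norm
of order `K ^ (-δ)`, so for it boundedness of the ansatz suffices. Against the smooth kernel the
phase is integrated by parts along the rays from the origin: each ray gains `1/K` from `f' ≠ 0` and
loses at most the derivative of the kernel, of size `ρ ^ (-(3 - δ))` cut off at `ρ = 1/K`, or the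
derivative of the phase error, of size `K ^ (1 - δ)`; either way the planar integral is of order
`K ^ (-δ)`. The angular phase is constant on rays, whence the uniformity in `N`. As the ansatz lives
in a ball, the potential at `w` decays like `(1 + |w|) ^ (-(2 - δ))`, which is in `L²(ℝ²)` because
`δ < 1`.
-/

open Set Metric Module

section SmoothedKernel

variable {q s ρ : ℝ}

/-- The kernel `ρ ^ (-q)` with its singularity at `0` smoothed out at scale `s`. -/
noncomputable def smoothedKernel (q s ρ : ℝ) : ℝ :=
  (ρ ^ 2 + s ^ 2) ^ (-q / 2)

/-- The size, up to a constant, of the error made by smoothing the kernel `ρ ^ (-q)` at scale `s`;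
the two bounds cross at `ρ = s`. -/
noncomputable def smoothingError (q s ρ : ℝ) : ℝ :=
  min (ρ ^ (-q)) (s * ρ ^ (-q - 1))

theorem smoothedKernel_nonneg : 0 ≤ smoothedKernel q s ρ := by
  unfold smoothedKernel; positivity

theorem smoothingError_nonneg (hs : 0 ≤ s) (hρ : 0 ≤ ρ) : 0 ≤ smoothingError q s ρ := by
  unfold smoothingError; positivity

theorem measurable_smoothingError : Measurable (smoothingError q s) := by
  unfold smoothingError; fun_prop

theorem contDiff_smoothedKernel_norm {V : Type*} [NormedAddCommGroup V] [InnerProductSpace ℝ V]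
    {n : WithTop ℕ∞} (hs : s ≠ 0) : ContDiff ℝ n fun v : V => smoothedKernel q s ‖v‖ :=
  ((contDiff_norm_sq ℝ).add contDiff_const).rpow_const_of_ne
    fun v => (by positivity : ‖v‖ ^ 2 + s ^ 2 ≠ 0)

theorem continuous_smoothedKernel_norm_sub {V : Type*} [NormedAddCommGroup V]
    [InnerProductSpace ℝ V] (hs : s ≠ 0) (w : V) :
    Continuous fun z => smoothedKernel q s ‖w - z‖ :=
  (contDiff_smoothedKernel_norm (n := 0) hs).continuous.comp (continuous_const.sub continuous_id)

theorem smoothedKernel_zero (hρ : 0 ≤ ρ) : smoothedKernel q 0 ρ = ρ ^ (-q) := by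
  rw [smoothedKernel, zero_pow two_ne_zero, add_zero, ← rpow_natCast, ← rpow_mul hρ]
  congr 1
  push_cast
  ring

theorem smoothedKernel_le_rpow (hq : 0 ≤ q) (hρ : 0 < ρ) : smoothedKernel q s ρ ≤ ρ ^ (-q) := by
  rw [← smoothedKernel_zero hρ.le, smoothedKernel, smoothedKernel]
  exact rpow_le_rpow_of_nonpos (by positivity) (by linarith [sq_nonneg s])
    (by linarith)

theorem mul_smoothedKernel_add_one_le {t : ℝ} (hs : s ≠ 0) (ht : t ^ 2 ≤ ρ ^ 2 + s ^ 2) :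
    t * smoothedKernel (q + 1) s ρ ≤ smoothedKernel q s ρ := by
  have hpos : 0 < ρ ^ 2 + s ^ 2 := by positivity
  have hsplit : smoothedKernel q s ρ = √(ρ ^ 2 + s ^ 2) * smoothedKernel (q + 1) s ρ := by
    rw [smoothedKernel, smoothedKernel, sqrt_eq_rpow, ← rpow_add hpos]
    ring_nf
  rw [hsplit]
  exact mul_le_mul_of_nonneg_right (le_sqrt_of_sq_le ht) smoothedKernel_nonneg

theorem mul_smoothedKernel_add_one_le_smoothingError (hq : 0 ≤ q) (hs : 0 < s) (hρ : 0 < ρ) :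
    s * smoothedKernel (q + 1) s ρ ≤ smoothingError q s ρ := by
  refine le_min ?_ ?_
  · exact (mul_smoothedKernel_add_one_le hs.ne' (le_add_of_nonneg_left (sq_nonneg ρ))).trans
      (smoothedKernel_le_rpow hq hρ)
  · rw [← neg_add']
    gcongr
    exact smoothedKernel_le_rpow (by linarith) hρ

theorem rpow_neg_sub_smoothedKernel_le (hq2 : q ≤ 2) (hs : 0 < s) (hρ : 0 < ρ) :
    ρ ^ (-q) - smoothedKernel q s ρ ≤ smoothingError q s ρ := by
  refine le_min (sub_le_self _ smoothedKernel_nonneg) ?_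
  have hsum : 0 < ρ ^ 2 + s ^ 2 := by positivity
  set t := ρ ^ 2 / (ρ ^ 2 + s ^ 2) with ht
  have ht0 : 0 < t := by positivity
  have ht1 : t ≤ 1 := div_le_one_of_le₀ (le_add_of_nonneg_right (sq_nonneg s)) hsum.le
  have hfactor : smoothedKernel q s ρ = ρ ^ (-q) * t ^ (q / 2) := by
    rw [← smoothedKernel_zero hρ.le, smoothedKernel, smoothedKernel, zero_pow two_ne_zero,
      add_zero, ht, div_rpow (by positivity) hsum.le, neg_div, rpow_neg hsum.le,
      rpow_neg (sq_nonneg ρ)]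
    field_simp
  have htpow : t ≤ t ^ (q / 2) := by
    simpa only [rpow_one] using rpow_le_rpow_of_exponent_ge ht0 ht1 (show q / 2 ≤ 1 by linarith)
  have hcompl : 1 - t ≤ s / ρ := by
    rw [ht, one_sub_div hsum.ne', div_le_div_iff₀ hsum hρ]
    nlinarith [mul_pos hs hρ, mul_nonneg hs.le (sq_nonneg (s - ρ)), pow_pos hs 3,
      mul_pos (mul_pos hs hρ) hρ]
  calc ρ ^ (-q) - smoothedKernel q s ρ = ρ ^ (-q) * (1 - t ^ (q / 2)) := by rw [hfactor]; ring
    _ ≤ ρ ^ (-q) * (s / ρ) := by gcongr; linarith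
    _ = s * ρ ^ (-q - 1) := by rw [rpow_sub_one hρ.ne']; ring

theorem abs_deriv_smoothedKernel_norm_sub_smul_le {V : Type*} [NormedAddCommGroup V]
    [InnerProductSpace ℝ V] {w u : V} (hu : ‖u‖ = 1) (hq : 0 ≤ q) (hs : s ≠ 0) (r : ℝ) :
    |deriv (fun r : ℝ => smoothedKernel q s ‖w - r • u‖) r| ≤
      q * smoothedKernel (q + 1) s ‖w - r • u‖ := by
  have hline : HasDerivAt (fun r : ℝ => w - r • u) (-u) r := by
    simpa only [one_smul] using ((hasDerivAt_id' r).smul_const u).const_sub w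
  set v := w - r • u
  have hinner : |inner ℝ v (-u)| ≤ ‖v‖ := by
    simpa only [norm_neg, hu, mul_one] using abs_real_inner_le_norm v (-u)
  have hderiv : deriv (fun r : ℝ => smoothedKernel q s ‖w - r • u‖) r =
      -q * (inner ℝ v (-u) * smoothedKernel (q + 1 + 1) s ‖v‖) := by
    have h := (hline.norm_sq.add_const (s ^ 2)).rpow_const (p := -q / 2) (Or.inl (by positivity))
    refine h.deriv.trans ?_
    rw [smoothedKernel, show -(q + 1 + 1) / 2 = -q / 2 - 1 by ring]
    ring
  rw [hderiv, abs_mul, abs_neg, abs_of_nonneg hq, abs_mul, abs_of_nonneg smoothedKernel_nonneg]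
  gcongr
  exact mul_smoothedKernel_add_one_le hs
    ((pow_le_pow_left₀ (abs_nonneg _) hinner 2).trans (le_add_of_nonneg_right (sq_nonneg s)))

end SmoothedKernel

section SmoothingErrorIntegral

theorem rpow_neg_le_of_le_two_mul {q x ρ : ℝ} (hq : 0 ≤ q) (hx : 0 < x) (hxρ : x ≤ 2 * ρ) :
    ρ ^ (-q) ≤ 2 ^ q * x ^ (-q) := by
  calc ρ ^ (-q) ≤ (x / 2) ^ (-q) :=
        rpow_le_rpow_of_nonpos (by positivity) (by linarith) (by linarith)
    _ = 2 ^ q * x ^ (-q) := by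
        rw [div_rpow hx.le zero_le_two, rpow_neg zero_le_two, div_inv_eq_mul, mul_comm]

theorem smoothingError_eq_rpow_mul {q s ρ : ℝ} (hs : 0 < s) (hρ : 0 ≤ ρ) :
    smoothingError q s ρ = s ^ (-q) * smoothingError q 1 (s⁻¹ * ρ) := by
  rw [smoothingError, smoothingError, mul_min_of_nonneg _ _ (by positivity),
    mul_rpow (by positivity) hρ, mul_rpow (by positivity) hρ, inv_rpow hs.le, inv_rpow hs.le,
    rpow_sub_one hs.ne']
  congr 1 <;> field_simp

theorem rpow_neg_le_smoothingError {q R ρ : ℝ} (hq : q ≠ 0) (hρ : 0 ≤ ρ) (hρR : ρ ≤ R) :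
    ρ ^ (-q) ≤ smoothingError q R ρ := by
  refine le_min le_rfl ?_
  rcases hρ.eq_or_lt with rfl | hρ
  · rw [zero_rpow (neg_ne_zero.2 hq)]
    positivity
  · calc ρ ^ (-q) = ρ * ρ ^ (-q - 1) := by rw [rpow_sub_one hρ.ne']; field_simp
      _ ≤ R * ρ ^ (-q - 1) := by gcongr

variable {E : Type*} [NormedAddCommGroup E] [NormedSpace ℝ E] [FiniteDimensional ℝ E]
  [MeasurableSpace E] [BorelSpace E] (μ : Measure E) [μ.IsAddHaarMeasure] {q s : ℝ}

theorem locallyIntegrable_norm_rpow_neg (hq : 0 < q) (hqd : q < finrank ℝ E) :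
    LocallyIntegrable (fun z : E => ‖z‖ ^ (-q)) μ := by
  have hdim : 1 ≤ finrank ℝ E := Nat.one_le_iff_ne_zero.2 fun h => by
    rw [h, Nat.cast_zero] at hqd; linarith
  refine locallyIntegrable_of_norm_le_rpow hdim (C := 1) hqd (.of_forall fun z => ?_)
    (Measurable.aestronglyMeasurable (by fun_prop))
  rw [one_mul, norm_of_nonneg (by positivity)]

theorem integrableOn_norm_sub_rpow_neg (hq : 0 < q) (hqd : q < finrank ℝ E) (b : ℝ) (w : E) :
    IntegrableOn (fun z => ‖w - z‖ ^ (-q)) (closedBall 0 b) μ := by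
  have hball : IntegrableOn (fun z : E => ‖z‖ ^ (-q)) (closedBall w b) μ :=
    (locallyIntegrable_norm_rpow_neg μ hq hqd).integrableOn_isCompact (isCompact_closedBall w b)
  have hpreimage : (fun z => w - z) ⁻¹' closedBall w b = closedBall (0 : E) b := by
    ext z; simp
  rw [← hpreimage]
  exact ((μ.measurePreserving_sub_left w).integrableOn_comp_preimage
    (MeasurableEquiv.subLeft w).measurableEmbedding).2 hball

theorem integrable_smoothingError_norm (hq : 0 < q) (hqd : q < finrank ℝ E)
    (hdq : finrank ℝ E < q + 1) (hs : 0 < s) :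
    Integrable (fun z : E => smoothingError q s ‖z‖) μ := by
  have hunit : Integrable (fun z : E => smoothingError q 1 ‖z‖) μ := by
    have hnear : Integrable ((closedBall 0 1).indicator fun z : E => ‖z‖ ^ (-q)) μ :=
      ((locallyIntegrable_norm_rpow_neg μ hq hqd).integrableOn_isCompact
        (isCompact_closedBall 0 1)).integrable_indicator measurableSet_closedBall
    have hfar : Integrable (fun z : E => 2 ^ (q + 1) * (1 + ‖z‖) ^ (-(q + 1))) μ :=
      (integrable_one_add_norm hdq).const_mul _
    refine (hnear.add hfar).mono'
      (measurable_smoothingError.comp measurable_norm).aestronglyMeasurable (.of_forall fun z => ?_)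
    rw [norm_of_nonneg (smoothingError_nonneg zero_le_one (norm_nonneg z)), Pi.add_apply]
    by_cases hz : z ∈ closedBall 0 1
    · rw [indicator_of_mem hz]
      exact (min_le_left _ _).trans (le_add_of_nonneg_right (by positivity))
    · have hz1 : 1 < ‖z‖ := by simpa using hz
      rw [indicator_of_notMem hz, zero_add]
      refine (min_le_right _ _).trans ?_
      rw [one_mul, ← neg_add']
      exact rpow_neg_le_of_le_two_mul (by linarith) (by positivity) (by linarith)
  refine ((hunit.comp_smul (inv_ne_zero hs.ne')).const_mul (s ^ (-q))).congr
    (.of_forall fun z => ?_)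
  simp only [smoothingError_eq_rpow_mul hs (norm_nonneg z), norm_smul, norm_inv,
    norm_of_nonneg hs.le]

theorem integral_smoothingError_norm (hs : 0 < s) :
    ∫ z : E, smoothingError q s ‖z‖ ∂μ =
      s ^ (finrank ℝ E - q) * ∫ z : E, smoothingError q 1 ‖z‖ ∂μ := by
  have hscale (z : E) :
      smoothingError q s ‖z‖ = s ^ (-q) * smoothingError q 1 ‖s⁻¹ • z‖ := by
    rw [smoothingError_eq_rpow_mul hs (norm_nonneg z), norm_smul, norm_inv, norm_of_nonneg hs.le]
  simp_rw [hscale]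
  rw [integral_const_mul,
    Measure.integral_comp_inv_smul_of_nonneg μ (fun z : E => smoothingError q 1 ‖z‖) hs.le,
    smul_eq_mul, ← mul_assoc, ← rpow_natCast, ← rpow_add hs, neg_add_eq_sub]

/-- The radial function by which both parts of the Riesz potential of a wave of wavelength `s` are
controlled; `δ` is the order of the potential and `ρ ^ (-q)` its kernel. -/
noncomputable def waveMajorant (q δ s ρ : ℝ) : ℝ :=
  smoothingError q s ρ + s ^ δ * ρ ^ (-q)

theorem waveMajorant_le_of_one_le {δ ρ : ℝ} (hδ : δ ≤ 1) (hs : 0 < s) (hs1 : s ≤ 1)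
    (hρ : 1 ≤ ρ) : waveMajorant q δ s ρ ≤ 2 * s ^ δ * ρ ^ (-q) := by
  have herror : smoothingError q s ρ ≤ s ^ δ * ρ ^ (-q) := by
    refine (min_le_right _ _).trans ?_
    gcongr ?_ * ?_
    · simpa only [rpow_one] using rpow_le_rpow_of_exponent_ge hs hs1 hδ
    · exact rpow_le_rpow_of_exponent_le hρ (by linarith)
  rw [waveMajorant]
  linarith

theorem integrableOn_waveMajorant (hq : 0 < q) (hqd : q < finrank ℝ E)
    (hdq : finrank ℝ E < q + 1) (hs : 0 < s) (δ b : ℝ) (w : E) :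
    IntegrableOn (fun z => waveMajorant q δ s ‖w - z‖) (closedBall 0 b) μ :=
  ((integrable_smoothingError_norm μ hq hqd hdq hs).comp_sub_left w).integrableOn.add
    ((integrableOn_norm_sub_rpow_neg μ hq hqd b w).const_mul _)

theorem setIntegral_waveMajorant_le_of_norm_le {b : ℝ} (hq : 0 < q) (hqd : q < finrank ℝ E)
    (hdq : finrank ℝ E < q + 1) (hs : 0 < s) {δ R : ℝ} (hR : 0 < R) {w : E} (hw : ‖w‖ + b ≤ R) :
    ∫ z in closedBall 0 b, waveMajorant q δ s ‖w - z‖ ∂μ ≤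
      (s ^ (finrank ℝ E - q) + s ^ δ * R ^ (finrank ℝ E - q)) *
        ∫ z : E, smoothingError q 1 ‖z‖ ∂μ := by
  have herror {t : ℝ} (ht : 0 < t) : Integrable (fun z => smoothingError q t ‖w - z‖) μ :=
    (integrable_smoothingError_norm μ hq hqd hdq ht).comp_sub_left w
  calc ∫ z in closedBall 0 b, waveMajorant q δ s ‖w - z‖ ∂μ
      ≤ ∫ z in closedBall 0 b,
          (smoothingError q s ‖w - z‖ + s ^ δ * smoothingError q R ‖w - z‖) ∂μ := by
        refine setIntegral_mono_on (integrableOn_waveMajorant μ hq hqd hdq hs δ b w)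
          ((herror hs).add ((herror hR).const_mul _)).integrableOn measurableSet_closedBall
          fun z hz => ?_
        have hzb : ‖z‖ ≤ b := by simpa using hz
        rw [waveMajorant]
        gcongr
        exact rpow_neg_le_smoothingError hq.ne' (norm_nonneg _) (by linarith [norm_sub_le w z])
    _ ≤ ∫ z, (smoothingError q s ‖w - z‖ + s ^ δ * smoothingError q R ‖w - z‖) ∂μ :=
        setIntegral_le_integral ((herror hs).add ((herror hR).const_mul _)) (.of_forall fun z =>
          add_nonneg (smoothingError_nonneg hs.le (norm_nonneg _))
            (mul_nonneg (by positivity) (smoothingError_nonneg hR.le (norm_nonneg _))))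
    _ = _ := by
        rw [integral_add (herror hs) ((herror hR).const_mul _), integral_const_mul,
          integral_sub_left_eq_self (fun z => smoothingError q s ‖z‖) μ w,
          integral_sub_left_eq_self (fun z => smoothingError q R ‖z‖) μ w,
          integral_smoothingError_norm μ hs, integral_smoothingError_norm μ hR]
        ring

theorem setIntegral_waveMajorant_le_of_lt_norm {b : ℝ} (hb : 0 ≤ b) (hq : 0 < q)
    (hqd : q < finrank ℝ E) (hdq : finrank ℝ E < q + 1) (hs : 0 < s) (hs1 : s ≤ 1) {δ : ℝ}
    (hδ : δ ≤ 1) {w : E} (hw : 2 * b + 1 < ‖w‖) :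
    ∫ z in closedBall 0 b, waveMajorant q δ s ‖w - z‖ ∂μ ≤
      μ.real (closedBall (0 : E) b) * (2 * s ^ δ * (2 ^ q * (1 + ‖w‖) ^ (-q))) := by
  rw [← smul_eq_mul, ← setIntegral_const]
  refine setIntegral_mono_on (integrableOn_waveMajorant μ hq hqd hdq hs δ b w)
    (integrableOn_const measure_closedBall_lt_top.ne) measurableSet_closedBall fun z hz => ?_
  have hzb : ‖z‖ ≤ b := by simpa using hz
  have hwz := norm_sub_norm_le w z
  refine (waveMajorant_le_of_one_le hδ hs hs1 (by linarith)).trans ?_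
  gcongr
  exact rpow_neg_le_of_le_two_mul hq.le (by positivity) (by linarith)

theorem exists_setIntegral_waveMajorant_le {b : ℝ} (hb : 0 ≤ b) (hq : 0 < q)
    (hqd : q < finrank ℝ E) (hdq : finrank ℝ E < q + 1) :
    ∃ C : ℝ, 0 ≤ C ∧ ∀ s : ℝ, 0 < s → s ≤ 1 → ∀ w : E,
      ∫ z in closedBall 0 b, waveMajorant q (finrank ℝ E - q) s ‖w - z‖ ∂μ ≤
        C * s ^ (finrank ℝ E - q) * (1 + ‖w‖) ^ (-q) := by
  set δ := finrank ℝ E - q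
  set R := 3 * b + 1
  set I := ∫ z : E, smoothingError q 1 ‖z‖ ∂μ
  have hI : 0 ≤ I := integral_nonneg fun z => smoothingError_nonneg zero_le_one (norm_nonneg z)
  set V := μ.real (closedBall (0 : E) b)
  refine ⟨(1 + R ^ δ) * I * (2 * b + 2) ^ q + V * (2 * 2 ^ q), by positivity,
    fun s hs hs1 w => ?_⟩
  rcases le_or_gt ‖w‖ (2 * b + 1) with hw | hw
  · have hweight : 1 ≤ (2 * b + 2) ^ q * (1 + ‖w‖) ^ (-q) := by
      rw [rpow_neg (by positivity), ← div_eq_mul_inv, one_le_div (by positivity)]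
      exact rpow_le_rpow (by positivity) (by linarith) hq.le
    calc _ ≤ (s ^ δ + s ^ δ * R ^ δ) * I :=
          setIntegral_waveMajorant_le_of_norm_le μ hq hqd hdq hs (by positivity) (by linarith)
      _ ≤ (s ^ δ + s ^ δ * R ^ δ) * I * ((2 * b + 2) ^ q * (1 + ‖w‖) ^ (-q)) :=
          le_mul_of_one_le_right (by positivity) hweight
      _ = (1 + R ^ δ) * I * (2 * b + 2) ^ q * s ^ δ * (1 + ‖w‖) ^ (-q) := by ring
      _ ≤ _ := by gcongr; exact le_add_of_nonneg_right (by positivity)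
  · calc _ ≤ V * (2 * s ^ δ * (2 ^ q * (1 + ‖w‖) ^ (-q))) :=
          setIntegral_waveMajorant_le_of_lt_norm μ hb hq hqd hdq hs hs1 (by linarith) hw
      _ = V * (2 * 2 ^ q) * s ^ δ * (1 + ‖w‖) ^ (-q) := by ring
      _ ≤ _ := by gcongr; exact le_add_of_nonneg_left (by positivity)

end SmoothingErrorIntegral

section NonstationaryPhase

theorem abs_deriv_mul_sin_add_le {A f e : ℝ → ℝ} {r : ℝ} (hA : DifferentiableAt ℝ A r)
    (hf : DifferentiableAt ℝ f r) (he : DifferentiableAt ℝ e r) (θ K : ℝ) :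
    |deriv (fun r => A r * sin (θ - K * f r + e r)) r +
        K * (A r * deriv f r * cos (θ - K * f r + e r))| ≤ |deriv A r| + |A r| * |deriv e r| := by
  set φ := θ - K * f r + e r
  have hderiv : deriv (fun r => A r * sin (θ - K * f r + e r)) r =
      deriv A r * sin φ + A r * (cos φ * (-(K * deriv f r) + deriv e r)) :=
    (hA.hasDerivAt.mul ((hf.hasDerivAt.const_mul K).const_sub θ |>.add he.hasDerivAt).sin).deriv
  calc _ = |deriv A r * sin φ + A r * deriv e r * cos φ| := by rw [hderiv]; ring_nf
    _ ≤ |deriv A r * sin φ| + |A r * deriv e r * cos φ| := abs_add_le _ _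
    _ ≤ |deriv A r| + |A r| * |deriv e r| := by
        rw [abs_mul, abs_mul, abs_mul (A r)]
        exact add_le_add (mul_le_of_le_one_right (abs_nonneg _) (abs_sin_le_one _))
          (mul_le_of_le_one_right (by positivity) (abs_cos_le_one _))

-- Integrating the derivative of `A * sin (θ - K * f + e)` moves the factor `K * deriv f` off `A`.
theorem abs_integral_mul_derivWithin_mul_cos_le {a b θ K : ℝ} {A f e m : ℝ → ℝ} (hab : a < b)
    (hK : 0 < K) (hA : ContDiffOn ℝ 1 A (Icc a b)) (hf : ContDiffOn ℝ 1 f (Icc a b))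
    (he : ContDiffOn ℝ 1 e (Icc a b)) (hAa : A a = 0) (hAb : A b = 0)
    (hm : IntervalIntegrable m volume a b)
    (hAm : ∀ r ∈ Ioo a b, |deriv A r| + |A r| * |deriv e r| ≤ m r) :
    |∫ r in a..b, A r * derivWithin f (Icc a b) r * cos (θ - K * f r + e r)| ≤
      K⁻¹ * ∫ r in a..b, m r := by
  set Φ : ℝ → ℝ := fun r => θ - K * f r + e r
  set F : ℝ → ℝ := fun r => A r * derivWithin f (Icc a b) r * cos (Φ r)
  set D : ℝ → ℝ := derivWithin (fun r => A r * sin (Φ r)) (Icc a b)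
  have hΦ : ContDiffOn ℝ 1 Φ (Icc a b) := (contDiffOn_const.sub (contDiffOn_const.mul hf)).add he
  have hS : ContDiffOn ℝ 1 (fun r => A r * sin (Φ r)) (Icc a b) := hA.mul hΦ.sin
  have hF : IntervalIntegrable F volume a b :=
    ((hA.continuousOn.mul (hf.continuousOn_derivWithin (uniqueDiffOn_Icc hab) le_rfl)).mul
      hΦ.cos.continuousOn).intervalIntegrable_of_Icc hab.le
  have hD : IntervalIntegrable D volume a b :=
    (hS.continuousOn_derivWithin (uniqueDiffOn_Icc hab) le_rfl).intervalIntegrable_of_Icc hab.le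
  have hD0 : ∫ r in a..b, D r = 0 := by
    rw [intervalIntegral.integral_derivWithin_Icc_of_contDiffOn_Icc hS hab.le, hAa, hAb]
    ring
  have hpointwise (r : ℝ) (hr : r ∈ Ioo a b) : |D r + K * F r| ≤ m r := by
    have hnhds := Icc_mem_nhds hr.1 hr.2
    have hdiff {h : ℝ → ℝ} (hh : ContDiffOn ℝ 1 h (Icc a b)) : DifferentiableAt ℝ h r :=
      (hh.contDiffAt hnhds).differentiableAt one_ne_zero
    simp only [D, F, derivWithin_of_mem_nhds hnhds]
    exact (abs_deriv_mul_sin_add_le (hdiff hA) (hdiff hf) (hdiff he) θ K).trans (hAm r hr)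
  calc |∫ r in a..b, F r| = K⁻¹ * |∫ r in a..b, (D r + K * F r)| := by
        rw [intervalIntegral.integral_add hD (hF.const_mul K), hD0, zero_add,
          intervalIntegral.integral_const_mul, abs_mul, abs_of_pos hK, inv_mul_cancel_left₀ hK.ne']
    _ ≤ K⁻¹ * ∫ r in a..b, m r := by
        gcongr
        exact (intervalIntegral.abs_integral_le_integral_abs hab.le).trans
          (intervalIntegral.integral_mono_on_of_le_Ioo hab.le (hD.add (hF.const_mul K)).abs hm
            hpointwise)

theorem abs_integral_mul_smoothedKernel_le {V : Type*} [NormedAddCommGroup V]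
    [InnerProductSpace ℝ V] {w u : V} (hu : ‖u‖ = 1) {a b q s θ K L B : ℝ} {G f e : ℝ → ℝ}
    (hab : a < b) (hq : 0 ≤ q) (hs : s ≠ 0) (hK : 0 < K) (hG : ContDiffOn ℝ 1 G (Icc a b))
    (hf : ContDiffOn ℝ 1 f (Icc a b)) (he : ContDiffOn ℝ 1 e (Icc a b)) (hGa : G a = 0)
    (hGb : G b = 0) (hGB : ∀ r ∈ Ioo a b, |G r| ≤ B ∧ |deriv G r| ≤ B)
    (heL : ∀ r ∈ Ioo a b, |deriv e r| ≤ L) :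
    |∫ r in a..b, G r * derivWithin f (Icc a b) r * cos (θ - K * f r + e r) *
        smoothedKernel q s ‖w - r • u‖| ≤
      K⁻¹ * ∫ r in a..b, B * ((1 + L) * smoothedKernel q s ‖w - r • u‖ +
        q * smoothedKernel (q + 1) s ‖w - r • u‖) := by
  have hk (p : ℝ) : ContDiff ℝ 1 fun r : ℝ => smoothedKernel p s ‖w - r • u‖ :=
    (contDiff_smoothedKernel_norm hs).comp (by fun_prop)
  set k : ℝ → ℝ := fun r => smoothedKernel q s ‖w - r • u‖
  set k' : ℝ → ℝ := fun r => smoothedKernel (q + 1) s ‖w - r • u‖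
  have hm : Continuous fun r => B * ((1 + L) * k r + q * k' r) :=
    (((hk q).continuous.const_mul _).add ((hk (q + 1)).continuous.const_mul _)).const_mul _
  have hbound (r : ℝ) (hr : r ∈ Ioo a b) : |deriv (fun r => G r * k r) r| +
      |G r * k r| * |deriv e r| ≤ B * ((1 + L) * k r + q * k' r) := by
    have hk0 : 0 ≤ k r := smoothedKernel_nonneg
    have hGr : DifferentiableAt ℝ G r :=
      (hG.contDiffAt (Icc_mem_nhds hr.1 hr.2)).differentiableAt one_ne_zero
    have hB : 0 ≤ B := (abs_nonneg _).trans (hGB r hr).1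
    calc _ = |deriv G r * k r + G r * deriv k r| + |G r * k r| * |deriv e r| := by
          rw [deriv_fun_mul hGr ((hk q).differentiable one_ne_zero r)]
      _ ≤ |deriv G r| * k r + |G r| * |deriv k r| + |G r| * k r * |deriv e r| := by
          rw [abs_mul (G r) (k r), abs_of_nonneg hk0]
          gcongr
          refine (abs_add_le _ _).trans_eq ?_
          rw [abs_mul, abs_mul, abs_of_nonneg hk0]
      _ ≤ B * k r + B * (q * k' r) + B * k r * L := by
          gcongr
          exacts [(hGB r hr).2, (hGB r hr).1,
            abs_deriv_smoothedKernel_norm_sub_smul_le hu hq hs r, (hGB r hr).1, heL r hr]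
      _ = _ := by ring
  refine le_of_eq_of_le ?_ (abs_integral_mul_derivWithin_mul_cos_le (θ := θ) hab hK
    (hG.mul (hk q).contDiffOn) hf he (by simp [hGa]) (by simp [hGb]) (hm.intervalIntegrable a b)
    hbound)
  congr 2 with r
  ring

end NonstationaryPhase

section PolarDomination

theorem integrableOn_polarCoord_symm {F : ℂ → ℝ} (hF : Integrable F) :
    IntegrableOn (fun p : ℝ × ℝ => p.1 * F (Complex.polarCoord.symm p)) polarCoord.target := by
  have hpair : Integrable fun p : ℝ × ℝ => F (Complex.measurableEquivRealProd.symm p) :=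
    (Complex.volume_preserving_equiv_real_prod.symm.integrable_comp_emb
      Complex.measurableEquivRealProd.symm.measurableEmbedding).2 hF
  have hpolar := (integrableOn_image_iff_integrableOn_abs_det_fderiv_smul volume
    polarCoord.open_target.measurableSet
    (fun p _ => (hasFDerivAt_polarCoord_symm p).hasFDerivWithinAt) polarCoord.symm.injOn _).1
    hpair.integrableOn
  refine hpolar.congr_fun (fun p hp => ?_) polarCoord.open_target.measurableSet
  simp only [det_fderivPolarCoordSymm, smul_eq_mul, abs_of_pos (show 0 < p.1 from hp.1),
    Complex.measurableEquivRealProd_symm_polarCoord_symm_apply]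

theorem abs_integral_le_of_forall_angle_abs_integral_le {F m : ℂ → ℝ} (hF : Integrable F)
    (hm : Integrable m)
    (hFm : ∀ θ ∈ Ioo (-π) π, |∫ r in Ioi 0, r * F (Complex.polarCoord.symm (r, θ))| ≤
      ∫ r in Ioi 0, r * m (Complex.polarCoord.symm (r, θ))) :
    |∫ z, F z| ≤ ∫ z, m z := by
  have htarget : (volume : Measure (ℝ × ℝ)).restrict polarCoord.target =
      (volume.restrict (Ioi 0)).prod (volume.restrict (Ioo (-π) π)) := by
    rw [Measure.prod_restrict]; rfl
  have hprod {G : ℂ → ℝ} (hG : Integrable G) :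
      Integrable (fun p : ℝ × ℝ => p.1 * G (Complex.polarCoord.symm p))
        ((volume.restrict (Ioi 0)).prod (volume.restrict (Ioo (-π) π))) :=
    htarget ▸ integrableOn_polarCoord_symm hG
  have hfubini {G : ℂ → ℝ} (hG : Integrable G) : ∫ z, G z =
      ∫ θ in Ioo (-π) π, ∫ r in Ioi 0, r * G (Complex.polarCoord.symm (r, θ)) := by
    simp only [← Complex.integral_comp_polarCoord_symm G, smul_eq_mul, htarget,
      integral_prod_symm _ (hprod hG)]
  rw [hfubini hF, hfubini hm, ← norm_eq_abs]
  exact norm_integral_le_of_norm_le (hprod hm).integral_prod_right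
    (ae_restrict_of_forall_mem measurableSet_Ioo hFm)

theorem abs_integral_le_of_forall_ray_abs_integral_le {a b : ℝ} (ha : 0 ≤ a) (hab : a ≤ b)
    {F m : ℂ → ℝ} (hF : Integrable F) (hF0 : ∀ z, ‖z‖ ∉ Ioc a b → F z = 0)
    (hm : IntegrableOn m {z | ‖z‖ ∈ Ioc a b})
    (hFm : ∀ θ ∈ Ioo (-π) π, |∫ r in a..b, r * F (Complex.polarCoord.symm (r, θ))| ≤
      ∫ r in a..b, r * m (Complex.polarCoord.symm (r, θ))) :
    |∫ z, F z| ≤ ∫ z in {z | ‖z‖ ∈ Ioc a b}, m z := by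
  have hannulus : MeasurableSet {z : ℂ | ‖z‖ ∈ Ioc a b} := measurable_norm measurableSet_Ioc
  have hradial {G : ℂ → ℝ} (hG : ∀ z, ‖z‖ ∉ Ioc a b → G z = 0) (θ : ℝ) :
      ∫ r in Ioi 0, r * G (Complex.polarCoord.symm (r, θ)) =
        ∫ r in a..b, r * G (Complex.polarCoord.symm (r, θ)) := by
    rw [intervalIntegral.integral_of_le hab]
    refine (setIntegral_eq_of_subset_of_forall_sdiff_eq_zero measurableSet_Ioi
      (fun r hr => ha.trans_lt hr.1) fun r hr => ?_)
    rw [hG, mul_zero]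
    rw [Complex.norm_polarCoord_symm, abs_of_pos hr.1]
    exact hr.2
  rw [← integral_indicator hannulus]
  refine abs_integral_le_of_forall_angle_abs_integral_le hF (hm.integrable_indicator hannulus)
    fun θ hθ => ?_
  rw [hradial hF0, hradial fun z hz => indicator_of_notMem (s := {z : ℂ | ‖z‖ ∈ Ioc a b}) hz m]
  refine (hFm θ hθ).trans_eq ?_
  rw [intervalIntegral.integral_of_le hab, intervalIntegral.integral_of_le hab]
  refine setIntegral_congr_fun measurableSet_Ioc fun r hr => ?_
  have hr' : ‖Complex.polarCoord.symm (r, θ)‖ ∈ Ioc a b := by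
    rwa [Complex.norm_polarCoord_symm, abs_of_pos (ha.trans_lt hr.1)]
  simp only [indicator_of_mem (s := {z : ℂ | ‖z‖ ∈ Ioc a b}) hr']

theorem polarCoord_symm_eq_smul (r θ : ℝ) :
    Complex.polarCoord.symm (r, θ) = r • Complex.polarCoord.symm (1, θ) := by
  simp only [Complex.polarCoord_symm_apply, Complex.ofReal_one, one_mul, Complex.real_smul]

theorem arg_polarCoord_symm {r θ : ℝ} (hr : 0 < r) (hθ : θ ∈ Ioo (-π) π) :
    Complex.arg (Complex.polarCoord.symm (r, θ)) = θ := by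
  rw [Complex.polarCoord_symm_apply, Complex.ofReal_cos, Complex.ofReal_sin]
  exact Complex.arg_mul_cos_add_sin_mul_I hr (Ioo_subset_Ioc_self hθ)

end PolarDomination

section OscillatoryAnsatz

theorem exists_abs_mul_le_abs_deriv_mul_le {a b : ℝ} {W : ℝ → ℝ} (hab : a < b)
    (hW : ContDiffOn ℝ 1 W (Icc a b)) :
    ∃ B : ℝ, 0 ≤ B ∧ ∀ (g : ℝ → ℝ) (Cg : ℝ), ContDiffOn ℝ 1 g (Icc a b) →
      (∀ r ∈ Ioo a b, |g r| + |deriv g r| ≤ Cg) →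
      ∀ r ∈ Ioo a b, |W r * g r| ≤ B * Cg ∧ |deriv (fun r => W r * g r) r| ≤ B * Cg := by
  obtain ⟨B₀, hB₀⟩ := isCompact_Icc.exists_bound_of_continuousOn hW.continuousOn
  obtain ⟨B₁, hB₁⟩ := isCompact_Icc.exists_bound_of_continuousOn
    (hW.continuousOn_derivWithin (uniqueDiffOn_Icc hab) le_rfl)
  refine ⟨max (max B₀ B₁) 0, le_max_right _ _, fun g Cg hg hgC r hr => ?_⟩
  set B := max (max B₀ B₁) 0
  have hnhds := Icc_mem_nhds hr.1 hr.2
  have hWB : |W r| ≤ B :=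
    (hB₀ r (Ioo_subset_Icc_self hr)).trans ((le_max_left _ _).trans (le_max_left _ _))
  have hW'B : |deriv W r| ≤ B := by
    rw [← derivWithin_of_mem_nhds hnhds]
    exact (hB₁ r (Ioo_subset_Icc_self hr)).trans ((le_max_right _ _).trans (le_max_left _ _))
  have hC : B * (|g r| + |deriv g r|) ≤ B * Cg :=
    mul_le_mul_of_nonneg_left (hgC r hr) (le_max_right _ _)
  constructor
  · calc |W r * g r| ≤ B * |g r| := by rw [abs_mul]; gcongr
      _ ≤ B * (|g r| + |deriv g r|) := by gcongr; exact le_add_of_nonneg_right (abs_nonneg _)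
      _ ≤ B * Cg := hC
  · rw [deriv_fun_mul ((hW.contDiffAt hnhds).differentiableAt one_ne_zero)
      ((hg.contDiffAt hnhds).differentiableAt one_ne_zero)]
    calc _ ≤ |deriv W r * g r| + |W r * deriv g r| := abs_add_le _ _
      _ ≤ B * |g r| + B * |deriv g r| := by rw [abs_mul, abs_mul]; gcongr
      _ = B * (|g r| + |deriv g r|) := by ring
      _ ≤ B * Cg := hC

/-- The oscillatory ansatz `ω_K` in complex notation, with amplitude `g`, radial phase `K f - e` and
an arbitrary angular phase `ψ` in place of `Nα`. -/
noncomputable def oscillatoryAnsatz (g f e ψ : ℝ → ℝ) (K : ℝ) (z : ℂ) : ℝ :=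
  g ‖z‖ * cos (ψ (Complex.arg z) - K * f ‖z‖ + e ‖z‖)

variable {a b δ K B : ℝ} {g f e ψ : ℝ → ℝ}

theorem abs_le_of_abs_add_abs_deriv_le (hab : a < b) (hg0 : ∀ r ∉ Ioo a b, g r = 0)
    (hgB : ∀ r ∈ Ioo a b, |g r| + |deriv g r| ≤ B) (r : ℝ) : |g r| ≤ B := by
  by_cases hr : r ∈ Ioo a b
  · exact (le_add_of_nonneg_right (abs_nonneg _)).trans (hgB r hr)
  · obtain ⟨c, hc⟩ : (Ioo a b).Nonempty := nonempty_Ioo.2 hab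
    rw [hg0 r hr, abs_zero]
    exact (add_nonneg (abs_nonneg _) (abs_nonneg _)).trans (hgB c hc)

theorem abs_oscillatoryAnsatz_le (hgB : ∀ r, |g r| ≤ B) (z : ℂ) :
    |oscillatoryAnsatz g f e ψ K z| ≤ B := by
  rw [oscillatoryAnsatz, abs_mul]
  exact (mul_le_of_le_one_right (abs_nonneg _) (abs_cos_le_one _)).trans (hgB _)

theorem oscillatoryAnsatz_eq_zero (hg0 : ∀ r ∉ Ioo a b, g r = 0) {z : ℂ}
    (hz : ‖z‖ ∉ Ioo a b) : oscillatoryAnsatz g f e ψ K z = 0 := by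
  rw [oscillatoryAnsatz, hg0 _ hz, zero_mul]

theorem measurable_oscillatoryAnsatz (hg : ContinuousOn g (Icc a b)) (hg0 : ∀ r ∉ Ioo a b, g r = 0)
    (hf : ContinuousOn f (Icc a b)) (he : ContinuousOn e (Icc a b)) (hψ : Measurable ψ) :
    Measurable (oscillatoryAnsatz g f e ψ K) := by
  have hindicator {h : ℝ → ℝ} (hh : ContinuousOn h (Icc a b)) :
      Measurable fun z : ℂ => (Icc a b).indicator h ‖z‖ := by
    classical
    rw [← piecewise_eq_indicator]
    exact (hh.measurable_piecewise continuousOn_const measurableSet_Icc).comp measurable_norm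
  have heq : oscillatoryAnsatz g f e ψ K = fun z => (Icc a b).indicator g ‖z‖ *
      cos (ψ (Complex.arg z) - K * (Icc a b).indicator f ‖z‖ + (Icc a b).indicator e ‖z‖) := by
    ext z
    by_cases hz : ‖z‖ ∈ Icc a b
    · simp only [oscillatoryAnsatz, indicator_of_mem hz]
    · rw [indicator_of_notMem hz, zero_mul,
        oscillatoryAnsatz_eq_zero hg0 fun h => hz (Ioo_subset_Icc_self h)]
  rw [heq]
  exact (hindicator hg).mul (((hψ.comp Complex.measurable_arg).sub
    ((hindicator hf).const_mul K)).add (hindicator he)).cos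

theorem integrable_oscillatoryAnsatz_mul (hg : ContinuousOn g (Icc a b))
    (hg0 : ∀ r ∉ Ioo a b, g r = 0) (hf : ContinuousOn f (Icc a b)) (he : ContinuousOn e (Icc a b))
    (hψ : Measurable ψ) {k : ℂ → ℝ} (hk : IntegrableOn k (closedBall 0 b)) :
    Integrable fun z => oscillatoryAnsatz g f e ψ K z * k z := by
  obtain ⟨B, hB⟩ := isCompact_Icc.exists_bound_of_continuousOn hg
  have hgB (r : ℝ) : |g r| ≤ max B 0 := by
    by_cases hr : r ∈ Ioo a b
    · exact (hB r (Ioo_subset_Icc_self hr)).trans (le_max_left _ _)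
    · rw [hg0 r hr, abs_zero]
      exact le_max_right _ _
  refine (integrableOn_iff_integrable_of_support_subset fun z hz => ?_).1
    (hk.bdd_mul (measurable_oscillatoryAnsatz hg hg0 hf he hψ).aestronglyMeasurable
      (.of_forall (abs_oscillatoryAnsatz_le hgB)))
  by_contra hzb
  exact hz (mul_eq_zero_of_left
    (oscillatoryAnsatz_eq_zero hg0 fun h => hzb (by simpa using h.2.le)) (k z))

theorem inv_mul_smoothedKernel_le_waveMajorant {q ρ : ℝ} (hq : 0 ≤ q) (hq2 : q ≤ 2) (hδ : δ ≤ 1)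
    (hK : 1 ≤ K) (hρ : 0 < ρ) :
    K⁻¹ * ((1 + K ^ (1 - δ)) * smoothedKernel q K⁻¹ ρ + q * smoothedKernel (q + 1) K⁻¹ ρ) ≤
      2 * waveMajorant q δ K⁻¹ ρ := by
  have hK0 : 0 < K := zero_lt_one.trans_le hK
  have hpow : K⁻¹ * K ^ (1 - δ) = K⁻¹ ^ δ := by
    rw [rpow_sub hK0, rpow_one, inv_rpow hK0.le]
    field_simp
  have hone : 1 ≤ K ^ (1 - δ) := one_le_rpow hK (by linarith)
  calc _ = K⁻¹ * (1 + K ^ (1 - δ)) * smoothedKernel q K⁻¹ ρ +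
          q * (K⁻¹ * smoothedKernel (q + 1) K⁻¹ ρ) := by ring
    _ ≤ K⁻¹ * (2 * K ^ (1 - δ)) * ρ ^ (-q) + 2 * smoothingError q K⁻¹ ρ := by
        gcongr
        · exact smoothedKernel_nonneg
        · linarith
        · exact smoothedKernel_le_rpow hq hρ
        · exact mul_nonneg (by positivity) smoothedKernel_nonneg
        · exact mul_smoothedKernel_add_one_le_smoothingError hq (by positivity) hρ
    _ = 2 * waveMajorant q δ K⁻¹ ρ := by rw [waveMajorant, ← hpow]; ring

-- Dividing `r * g r` by `f'` exhibits the factor `f'` required by the nonstationary phase estimate.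
theorem abs_integral_ray_oscillatoryAnsatz_mul_smoothedKernel_le {q s L θ : ℝ} (ha : 0 < a)
    (hab : a < b) (hf : ContDiffOn ℝ 2 f (Icc a b))
    (hf' : ∀ r ∈ Icc a b, derivWithin f (Icc a b) r ≠ 0) (hg : ContDiffOn ℝ 1 g (Icc a b))
    (hg0 : ∀ r ∉ Ioo a b, g r = 0) (he : ContDiffOn ℝ 1 e (Icc a b))
    (heL : ∀ r ∈ Ioo a b, |deriv e r| ≤ L)
    (hB : ∀ r ∈ Ioo a b, |r / derivWithin f (Icc a b) r * g r| ≤ B ∧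
      |deriv (fun r => r / derivWithin f (Icc a b) r * g r) r| ≤ B)
    (hK : 0 < K) (hq : 0 ≤ q) (hs : s ≠ 0) (hθ : θ ∈ Ioo (-π) π) (w : ℂ) :
    |∫ r in a..b, r * (oscillatoryAnsatz g f e ψ K (Complex.polarCoord.symm (r, θ)) *
        smoothedKernel q s ‖w - Complex.polarCoord.symm (r, θ)‖)| ≤
      K⁻¹ * ∫ r in a..b, B * ((1 + L) * smoothedKernel q s ‖w - Complex.polarCoord.symm (r, θ)‖ +
        q * smoothedKernel (q + 1) s ‖w - Complex.polarCoord.symm (r, θ)‖) := by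
  have hunit : ‖Complex.polarCoord.symm (1, θ)‖ = 1 := by
    rw [Complex.norm_polarCoord_symm, abs_one]
  have hf'C : ContDiffOn ℝ 1 (derivWithin f (Icc a b)) (Icc a b) :=
    hf.derivWithin (uniqueDiffOn_Icc hab) (by norm_num)
  have hW : ContDiffOn ℝ 1 (fun r => r / derivWithin f (Icc a b) r) (Icc a b) :=
    contDiffOn_id.div hf'C hf'
  have hray := abs_integral_mul_smoothedKernel_le (w := w) (θ := ψ θ) hunit hab hq hs hK
    (hW.mul hg) (hf.of_le one_le_two) he (mul_eq_zero_of_right _ (hg0 a left_notMem_Ioo))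
    (mul_eq_zero_of_right _ (hg0 b right_notMem_Ioo)) hB heL
  simp only [← polarCoord_symm_eq_smul] at hray
  refine le_of_eq_of_le (congrArg _ (intervalIntegral.integral_congr fun r hr => ?_)) hray
  rw [uIcc_of_le hab.le] at hr
  have hr0 : 0 < r := ha.trans_le hr.1
  simp only [oscillatoryAnsatz, Complex.norm_polarCoord_symm, abs_of_pos hr0,
    arg_polarCoord_symm hr0 hθ]
  field_simp [hf' r hr]

theorem abs_integral_oscillatoryAnsatz_mul_smoothedKernel_le {q s L : ℝ} (ha : 0 < a)
    (hab : a < b) (hf : ContDiffOn ℝ 2 f (Icc a b))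
    (hf' : ∀ r ∈ Icc a b, derivWithin f (Icc a b) r ≠ 0) (hg : ContDiffOn ℝ 1 g (Icc a b))
    (hg0 : ∀ r ∉ Ioo a b, g r = 0) (he : ContDiffOn ℝ 1 e (Icc a b))
    (heL : ∀ r ∈ Ioo a b, |deriv e r| ≤ L) (hψ : Measurable ψ) (hL : 0 ≤ L) (hB0 : 0 ≤ B)
    (hB : ∀ r ∈ Ioo a b, |r / derivWithin f (Icc a b) r * g r| ≤ B ∧
      |deriv (fun r => r / derivWithin f (Icc a b) r * g r) r| ≤ B)
    (hK : 0 < K) (hq : 0 ≤ q) (hs : s ≠ 0) (w : ℂ) :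
    |∫ z, oscillatoryAnsatz g f e ψ K z * smoothedKernel q s ‖w - z‖| ≤
      B * a⁻¹ * ∫ z in closedBall 0 b, K⁻¹ * ((1 + L) * smoothedKernel q s ‖w - z‖ +
        q * smoothedKernel (q + 1) s ‖w - z‖) := by
  have hk (p : ℝ) : Continuous fun z : ℂ => smoothedKernel p s ‖w - z‖ :=
    continuous_smoothedKernel_norm_sub hs w
  set k : ℂ → ℝ := fun z => smoothedKernel q s ‖w - z‖
  set M : ℂ → ℝ := fun z => (1 + L) * k z + q * smoothedKernel (q + 1) s ‖w - z‖
  have hM : Continuous M := ((hk q).const_mul _).add ((hk (q + 1)).const_mul q)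
  have hM0 (z : ℂ) : 0 ≤ M z := add_nonneg (mul_nonneg (by positivity) smoothedKernel_nonneg)
    (mul_nonneg hq smoothedKernel_nonneg)
  have hball {G : ℂ → ℝ} (hG : Continuous G) : IntegrableOn G (closedBall 0 b) :=
    hG.continuousOn.integrableOn_compact (isCompact_closedBall 0 b)
  have hannulus : {z : ℂ | ‖z‖ ∈ Ioc a b} ⊆ closedBall 0 b := fun z hz => by simpa using hz.2
  have hcont : Continuous fun z => a⁻¹ * (K⁻¹ * (B * M z)) := by fun_prop
  have hplane : |∫ z, oscillatoryAnsatz g f e ψ K z * k z| ≤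
      ∫ z in {z | ‖z‖ ∈ Ioc a b}, a⁻¹ * (K⁻¹ * (B * M z)) := by
    refine abs_integral_le_of_forall_ray_abs_integral_le ha.le hab.le
      (integrable_oscillatoryAnsatz_mul hg.continuousOn hg0 hf.continuousOn he.continuousOn hψ
        (hball (hk q))) (fun z hz => ?_) ((hball hcont).mono_set hannulus) fun θ hθ => ?_
    · rw [oscillatoryAnsatz_eq_zero hg0 fun h => hz (Ioo_subset_Ioc_self h), zero_mul]
    refine (abs_integral_ray_oscillatoryAnsatz_mul_smoothedKernel_le ha hab hf hf' hg hg0 he heL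
      hB hK hq hs hθ w).trans ?_
    have hpolar : Continuous fun r : ℝ => Complex.polarCoord.symm (r, θ) := by
      simp only [Complex.polarCoord_symm_apply]
      fun_prop
    rw [← intervalIntegral.integral_const_mul]
    refine intervalIntegral.integral_mono_on hab.le
      ((((hM.comp hpolar).const_mul B).const_mul K⁻¹).intervalIntegrable _ _)
      ((continuous_id.mul (hcont.comp hpolar)).intervalIntegrable _ _) fun r hr => ?_
    have hweight : 1 ≤ r * a⁻¹ := by rw [← div_eq_mul_inv, one_le_div ha]; exact hr.1
    refine (le_mul_of_one_le_left ?_ hweight).trans_eq (mul_assoc _ _ _)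
    exact mul_nonneg (inv_pos.2 hK).le (mul_nonneg hB0 (hM0 _))
  calc _ ≤ ∫ z in {z | ‖z‖ ∈ Ioc a b}, a⁻¹ * (K⁻¹ * (B * M z)) := hplane
    _ ≤ ∫ z in closedBall 0 b, a⁻¹ * (K⁻¹ * (B * M z)) :=
        setIntegral_mono_set (hball hcont)
          (.of_forall fun z => mul_nonneg (inv_pos.2 ha).le
            (mul_nonneg (inv_pos.2 hK).le (mul_nonneg hB0 (hM0 z)))) hannulus.eventuallyLE
    _ = _ := by
        rw [← integral_const_mul]
        congr with z
        ring

theorem abs_integral_oscillatoryAnsatz_mul_smoothing_error_le {q s Cg : ℝ} (hq : 1 < q)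
    (hq2 : q < 2) (hs : 0 < s) (hg0 : ∀ r ∉ Ioo a b, g r = 0) (hgC : ∀ r, |g r| ≤ Cg) (w : ℂ) :
    |∫ z, oscillatoryAnsatz g f e ψ K z * (‖w - z‖ ^ (-q) - smoothedKernel q s ‖w - z‖)| ≤
      Cg * ∫ z in closedBall 0 b, waveMajorant q δ s ‖w - z‖ := by
  have hsupport (z : ℂ) (hz : z ∉ closedBall 0 b) : oscillatoryAnsatz g f e ψ K z *
      (‖w - z‖ ^ (-q) - smoothedKernel q s ‖w - z‖) = 0 :=
    mul_eq_zero_of_left (oscillatoryAnsatz_eq_zero hg0 fun h => hz (by simpa using h.2.le)) _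
  have hmajorant : IntegrableOn (fun z => waveMajorant q δ s ‖w - z‖) (closedBall 0 b) :=
    integrableOn_waveMajorant volume (by linarith) (by simpa using hq2)
      (by rw [Complex.finrank_real_complex]; norm_num; linarith) hs δ b w
  rw [← setIntegral_eq_integral_of_forall_compl_eq_zero hsupport, ← integral_const_mul,
    ← norm_eq_abs]
  refine norm_integral_le_of_norm_le (hmajorant.const_mul Cg) (ae_restrict_of_ae ?_)
  filter_upwards [compl_mem_ae_iff.2 (measure_singleton w)] with z hz
  have hρ : 0 < ‖w - z‖ := norm_pos_iff.2 (sub_ne_zero.2 (Ne.symm hz))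
  have herror : ‖w - z‖ ^ (-q) - smoothedKernel q s ‖w - z‖ ≤ waveMajorant q δ s ‖w - z‖ :=
    (rpow_neg_sub_smoothedKernel_le hq2.le hs hρ).trans
      (le_add_of_nonneg_right (by positivity))
  rw [norm_mul, norm_eq_abs, norm_eq_abs,
    abs_of_nonneg (sub_nonneg.2 (smoothedKernel_le_rpow (by linarith) hρ))]
  exact mul_le_mul (abs_oscillatoryAnsatz_le hgC z) herror
    (sub_nonneg.2 (smoothedKernel_le_rpow (by linarith) hρ)) ((abs_nonneg _).trans (hgC 0))

theorem exists_abs_integral_oscillatoryAnsatz_mul_smoothedKernel_le (ha : 0 < a) (hab : a < b)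
    (hδ : δ ∈ Ioo 0 1) (hf : ContDiffOn ℝ 2 f (Icc a b))
    (hf' : ∀ r ∈ Icc a b, derivWithin f (Icc a b) r ≠ 0) :
    ∃ C : ℝ, 0 ≤ C ∧ ∀ (g e ψ : ℝ → ℝ) (K Cg : ℝ), ContDiffOn ℝ 1 g (Icc a b) →
      (∀ r ∉ Ioo a b, g r = 0) → (∀ r ∈ Ioo a b, |g r| + |deriv g r| ≤ Cg) →
      ContDiffOn ℝ 1 e (Icc a b) → (∀ r ∈ Ioo a b, |deriv e r| ≤ K ^ (1 - δ)) →
      Measurable ψ → 1 ≤ K → ∀ w : ℂ,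
        |∫ z, oscillatoryAnsatz g f e ψ K z * smoothedKernel (2 - δ) K⁻¹ ‖w - z‖| ≤
          C * Cg * ∫ z in closedBall 0 b, waveMajorant (2 - δ) δ K⁻¹ ‖w - z‖ := by
  obtain ⟨hδ0, hδ1⟩ := hδ
  have hW : ContDiffOn ℝ 1 (fun r => r / derivWithin f (Icc a b) r) (Icc a b) :=
    contDiffOn_id.div (hf.derivWithin (uniqueDiffOn_Icc hab) (by norm_num)) hf'
  obtain ⟨B, hB0, hB⟩ := exists_abs_mul_le_abs_deriv_mul_le hab hW
  refine ⟨2 * B * a⁻¹, by positivity, fun g e ψ K Cg hg hg0 hgC he heK hψ hK w => ?_⟩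
  have hK0 : 0 < K := zero_lt_one.trans_le hK
  have hCg : 0 ≤ Cg := (abs_nonneg _).trans (abs_le_of_abs_add_abs_deriv_le hab hg0 hgC 0)
  have hmajorant : IntegrableOn (fun z : ℂ => 2 * waveMajorant (2 - δ) δ K⁻¹ ‖w - z‖)
      (closedBall 0 b) :=
    (integrableOn_waveMajorant volume (by linarith) (by simpa using hδ0)
      (by rw [Complex.finrank_real_complex]; norm_num; linarith) (by positivity) δ b w).const_mul 2
  calc _ ≤ B * Cg * a⁻¹ * ∫ z in closedBall 0 b,
          K⁻¹ * ((1 + K ^ (1 - δ)) * smoothedKernel (2 - δ) K⁻¹ ‖w - z‖ +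
            (2 - δ) * smoothedKernel (2 - δ + 1) K⁻¹ ‖w - z‖) :=
        abs_integral_oscillatoryAnsatz_mul_smoothedKernel_le ha hab hf hf' hg hg0 he heK hψ
          (by positivity) (by positivity) (hB g Cg hg hgC) hK0 (by linarith) (by positivity) w
    _ ≤ B * Cg * a⁻¹ * ∫ z in closedBall 0 b, 2 * waveMajorant (2 - δ) δ K⁻¹ ‖w - z‖ := by
        refine mul_le_mul_of_nonneg_left (integral_mono_of_nonneg (.of_forall fun z => ?_)
          hmajorant (ae_restrict_of_ae ?_)) (by positivity)
        · exact mul_nonneg (by positivity) (add_nonneg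
            (mul_nonneg (by positivity) smoothedKernel_nonneg)
            (mul_nonneg (by linarith) smoothedKernel_nonneg))
        · filter_upwards [compl_mem_ae_iff.2 (measure_singleton w)] with z hz
          exact inv_mul_smoothedKernel_le_waveMajorant (by linarith) (by linarith) hδ1.le hK
            (norm_pos_iff.2 (sub_ne_zero.2 (Ne.symm hz)))
    _ = _ := by rw [integral_const_mul]; ring

theorem integral_oscillatoryAnsatz_div_eq_add {q s : ℝ} (hq : 0 < q) (hq2 : q < 2) (hs : s ≠ 0)
    (hg : ContinuousOn g (Icc a b)) (hg0 : ∀ r ∉ Ioo a b, g r = 0) (hf : ContinuousOn f (Icc a b))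
    (he : ContinuousOn e (Icc a b)) (hψ : Measurable ψ) (w : ℂ) :
    ∫ z, oscillatoryAnsatz g f e ψ K z / ‖w - z‖ ^ q =
      (∫ z, oscillatoryAnsatz g f e ψ K z * smoothedKernel q s ‖w - z‖) +
        ∫ z, oscillatoryAnsatz g f e ψ K z * (‖w - z‖ ^ (-q) - smoothedKernel q s ‖w - z‖) := by
  have hsmooth : IntegrableOn (fun z : ℂ => smoothedKernel q s ‖w - z‖) (closedBall 0 b) :=
    (continuous_smoothedKernel_norm_sub hs w).continuousOn.integrableOn_compact
      (isCompact_closedBall 0 b)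
  have hkernel : IntegrableOn (fun z : ℂ => ‖w - z‖ ^ (-q)) (closedBall 0 b) :=
    integrableOn_norm_sub_rpow_neg volume hq (by simpa using hq2) b w
  have herror : IntegrableOn (fun z : ℂ => ‖w - z‖ ^ (-q) - smoothedKernel q s ‖w - z‖)
      (closedBall 0 b) := hkernel.sub hsmooth
  rw [← integral_add (integrable_oscillatoryAnsatz_mul hg hg0 hf he hψ hsmooth)
    (integrable_oscillatoryAnsatz_mul hg hg0 hf he hψ herror)]
  congr with z
  rw [rpow_neg (norm_nonneg _)]
  ring

theorem exists_abs_integral_oscillatoryAnsatz_div_le (ha : 0 < a) (hab : a < b)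
    (hδ : δ ∈ Ioo 0 1) (hf : ContDiffOn ℝ 2 f (Icc a b))
    (hf' : ∀ r ∈ Icc a b, derivWithin f (Icc a b) r ≠ 0) :
    ∃ C : ℝ, 0 ≤ C ∧ ∀ (g e ψ : ℝ → ℝ) (K Cg : ℝ), ContDiffOn ℝ 1 g (Icc a b) →
      (∀ r ∉ Ioo a b, g r = 0) → (∀ r ∈ Ioo a b, |g r| + |deriv g r| ≤ Cg) →
      ContDiffOn ℝ 1 e (Icc a b) → (∀ r ∈ Ioo a b, |deriv e r| ≤ K ^ (1 - δ)) →
      Measurable ψ → 1 ≤ K → ∀ w : ℂ,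
        |∫ z, oscillatoryAnsatz g f e ψ K z / ‖w - z‖ ^ (2 - δ)| ≤
          C * K ^ (-δ) * Cg * (1 + ‖w‖) ^ (-(2 - δ)) := by
  obtain ⟨C₀, hC₀, hsmooth⟩ :=
    exists_abs_integral_oscillatoryAnsatz_mul_smoothedKernel_le ha hab hδ hf hf'
  obtain ⟨hδ0, hδ1⟩ := hδ
  obtain ⟨C₁, hC₁, hmajorant⟩ := exists_setIntegral_waveMajorant_le (volume : Measure ℂ)
    (q := 2 - δ) (ha.trans hab).le (by linarith) (by simpa using hδ0)
    (by rw [Complex.finrank_real_complex]; norm_num; linarith)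
  rw [Complex.finrank_real_complex, Nat.cast_ofNat, sub_sub_cancel] at hmajorant
  refine ⟨(C₀ + 1) * C₁, by positivity, fun g e ψ K Cg hg hg0 hgC he heK hψ hK w => ?_⟩
  have hK0 : 0 < K := zero_lt_one.trans_le hK
  have hgabs : ∀ r, |g r| ≤ Cg := abs_le_of_abs_add_abs_deriv_le hab hg0 hgC
  rw [integral_oscillatoryAnsatz_div_eq_add (by linarith) (by linarith) (inv_ne_zero hK0.ne')
    hg.continuousOn hg0 hf.continuousOn he.continuousOn hψ w]
  refine (abs_add_le _ _).trans ?_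
  calc _ ≤ C₀ * Cg * (∫ z in closedBall 0 b, waveMajorant (2 - δ) δ K⁻¹ ‖w - z‖) +
          Cg * ∫ z in closedBall 0 b, waveMajorant (2 - δ) δ K⁻¹ ‖w - z‖ :=
        add_le_add (hsmooth g e ψ K Cg hg hg0 hgC he heK hψ hK w)
          (abs_integral_oscillatoryAnsatz_mul_smoothing_error_le (by linarith) (by linarith)
            (by positivity) hg0 hgabs w)
    _ = (C₀ + 1) * Cg * ∫ z in closedBall 0 b, waveMajorant (2 - δ) δ K⁻¹ ‖w - z‖ := by ring
    _ ≤ (C₀ + 1) * Cg * (C₁ * K⁻¹ ^ δ * (1 + ‖w‖) ^ (-(2 - δ))) := by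
        have hCg : 0 ≤ Cg := (abs_nonneg _).trans (hgabs 0)
        gcongr
        exact hmajorant K⁻¹ (by positivity) (inv_le_one_of_one_le₀ hK) w
    _ = _ := by rw [inv_rpow hK0.le, ← rpow_neg hK0.le]; ring

end OscillatoryAnsatz

theorem memLp_two_one_add_norm_rpow_neg {E : Type*} [NormedAddCommGroup E] [NormedSpace ℝ E]
    [FiniteDimensional ℝ E] [MeasurableSpace E] [BorelSpace E] (μ : Measure E)
    [μ.IsAddHaarMeasure] {q : ℝ} (hq : finrank ℝ E < 2 * q) :
    MemLp (fun x : E => (1 + ‖x‖) ^ (-q)) 2 μ := by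
  rw [memLp_two_iff_integrable_sq (Measurable.aestronglyMeasurable (by fun_prop))]
  refine (integrable_one_add_norm hq).congr (.of_forall fun x => ?_)
  simp only [← rpow_mul_natCast (show 0 ≤ 1 + ‖x‖ by positivity)]
  congr 1
  push_cast
  ring

theorem arg_orthonormalBasisOneI_repr_symm (x : EuclideanSpace ℝ (Fin 2)) :
    Complex.arg (Complex.orthonormalBasisOneI.repr.symm x) = polarAngle x := by
  rw [Complex.orthonormalBasisOneI_repr_symm_apply, polarAngle]

theorem rieszPot_eq_integral_complex (δ : ℝ) (F : ℝ → ℝ → ℝ) (x : EuclideanSpace ℝ (Fin 2)) :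
    rieszPot δ (fun y => F ‖y‖ (polarAngle y)) x = (rieszGamma δ)⁻¹ * ∫ z : ℂ,
      F ‖z‖ (Complex.arg z) / ‖Complex.orthonormalBasisOneI.repr.symm x - z‖ ^ (2 - δ) := by
  rw [rieszPot, ← Complex.orthonormalBasisOneI.repr.symm.measurePreserving.integral_comp
    Complex.orthonormalBasisOneI.repr.symm.toHomeomorph.measurableEmbedding]
  simp only [← map_sub, LinearIsometryEquiv.norm_map, arg_orthonormalBasisOneI_repr_symm]

theorem oscillatory_ansatz_neg_sobolev_general {a b δ : ℝ} (ha : 0 < a) (hab : a < b)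
    (hδ : δ ∈ Ioo 0 1) {f : ℝ → ℝ} (hf : ContDiffOn ℝ 2 f (Icc a b))
    (hf' : ∀ r ∈ Icc a b, derivWithin f (Icc a b) r ≠ 0) :
    ∃ C : ℝ, 1 ≤ C ∧ ∀ (g e ψ : ℝ → ℝ) (K Cg : ℝ), ContDiffOn ℝ 1 g (Icc a b) →
      (∀ r ∉ Ioo a b, g r = 0) → (∀ r ∈ Ioo a b, |g r| + |deriv g r| ≤ Cg) →
      ContDiffOn ℝ 1 e (Icc a b) → (∀ r ∈ Ioo a b, |deriv e r| ≤ K ^ (1 - δ)) →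
      Measurable ψ → 1 ≤ K →
        eLpNorm (rieszPot δ fun y => g ‖y‖ * cos (ψ (polarAngle y) - K * f ‖y‖ + e ‖y‖)) 2 volume ≤
          ENNReal.ofReal (C * K ^ (-δ) * Cg) := by
  obtain ⟨C₀, hC₀, hpointwise⟩ := exists_abs_integral_oscillatoryAnsatz_div_le ha hab hδ hf hf'
  set m : EuclideanSpace ℝ (Fin 2) → ℝ := fun x => (1 + ‖x‖) ^ (-(2 - δ))
  have hm : MemLp m 2 volume := memLp_two_one_add_norm_rpow_neg volume
    (by rw [finrank_euclideanSpace_fin]; push_cast; linarith [hδ.2])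
  set T := (eLpNorm m 2 volume).toReal
  set Γ := |(rieszGamma δ)⁻¹|
  refine ⟨max 1 (Γ * C₀ * T), le_max_left _ _, fun g e ψ K Cg hg hg0 hgC he heK hψ hK => ?_⟩
  have hCg : 0 ≤ Cg := (abs_nonneg _).trans (abs_le_of_abs_add_abs_deriv_le hab hg0 hgC 0)
  have hbound (x : EuclideanSpace ℝ (Fin 2)) :
      ‖rieszPot δ (fun y => g ‖y‖ * cos (ψ (polarAngle y) - K * f ‖y‖ + e ‖y‖)) x‖ ≤
        ((Γ * C₀ * K ^ (-δ) * Cg) • m) x := by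
    rw [rieszPot_eq_integral_complex δ fun r θ => g r * cos (ψ θ - K * f r + e r), norm_mul,
      norm_eq_abs, norm_eq_abs]
    calc _ ≤ Γ * (C₀ * K ^ (-δ) * Cg *
            (1 + ‖Complex.orthonormalBasisOneI.repr.symm x‖) ^ (-(2 - δ))) := by
          gcongr
          exact hpointwise g e ψ K Cg hg hg0 hgC he heK hψ hK _
      _ = _ := by rw [LinearIsometryEquiv.norm_map, Pi.smul_apply, smul_eq_mul]; ring
  calc _ ≤ eLpNorm ((Γ * C₀ * K ^ (-δ) * Cg) • m) 2 volume := eLpNorm_mono_real hbound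
    _ = ENNReal.ofReal (Γ * C₀ * T * K ^ (-δ) * Cg) := by
        rw [eLpNorm_const_smul, enorm_of_nonneg (by positivity), ← ENNReal.ofReal_toReal hm.2.ne,
          ← ENNReal.ofReal_mul (by positivity)]
        congr 1
        ring
    _ ≤ _ := by
        gcongr
        exact le_max_right _ _

/-- The oscillatory ansatz `ω_K(r,α) = g(r) cos(Nα − K f(r) + f_err(r))`
has `‖ω_K‖_{Ḣ^{−δ}} ≤ C K^{−δ} ‖g‖_{C¹}`, uniformly over `g`, `N`, `K ≥ K₀` and
error phases `f_err` with `‖f_err‖_{C¹} ≤ K^{1−ε}`. -/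
theorem oscillatory_ansatz_neg_sobolev (ε δ : ℝ) (hε : ε ∈ Set.Ioo (0 : ℝ) 1)
    (hδ : δ ∈ Set.Ioo 0 ε) (f : ℝ → ℝ)
    (hf : ContDiffOn ℝ 2 f (Set.Icc (1 / 2) 4))
    (hf' : ∀ r ∈ Set.Icc (1 / 2 : ℝ) 4, 0 < deriv f r) :
    ∃ C K₀ : ℝ, 1 ≤ C ∧ 1 ≤ K₀ ∧
      ∀ (g : ℝ → ℝ) (K : ℝ) (N : ℕ) (ferr : ℝ → ℝ) (Cg : ℝ),
        ContDiff ℝ 2 g → Function.support g ⊆ Set.Ioo (1 / 2) 4 →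
        K₀ ≤ K →
        ContDiffOn ℝ 1 ferr (Set.Icc (1 / 2) 4) →
        (∀ r ∈ Set.Icc (1 / 2 : ℝ) 4, |ferr r| + |deriv ferr r| ≤ K ^ (1 - ε)) →
        (∀ r : ℝ, |g r| + |deriv g r| ≤ Cg) →
        eLpNorm (fun x : EuclideanSpace ℝ (Fin 2) =>
            rieszPot δ (fun y => g ‖y‖ *
              Real.cos (N * polarAngle y - K * f ‖y‖ + ferr ‖y‖)) x) 2 volume ≤
          ENNReal.ofReal (C * K ^ (-δ) * Cg) := by
  obtain ⟨hδ0, hδε⟩ := hδ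
  have hf'ne : ∀ r ∈ Icc (1 / 2 : ℝ) 4, derivWithin f (Icc (1 / 2) 4) r ≠ 0 := fun r hr => by
    rw [(differentiableAt_of_deriv_ne_zero (hf' r hr).ne').derivWithin
      (uniqueDiffOn_Icc (by norm_num) r hr)]
    exact (hf' r hr).ne'
  obtain ⟨C, hC, hbound⟩ := oscillatory_ansatz_neg_sobolev_general (by norm_num) (by norm_num)
    ⟨hδ0, hδε.trans hε.2⟩ hf hf'ne
  refine ⟨C, 1, hC, le_rfl, fun g K N ferr Cg hg hgsupp hK hferr hferrK hgC => ?_⟩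
  refine hbound g ferr (fun θ => N * θ) K Cg (hg.of_le one_le_two).contDiffOn
    (fun r hr => by_contra fun h => hr (hgsupp h)) (fun r _ => hgC r) hferr (fun r hr => ?_)
    (measurable_id.const_mul _) hK
  calc |deriv ferr r| ≤ |ferr r| + |deriv ferr r| := le_add_of_nonneg_left (abs_nonneg _)
    _ ≤ K ^ (1 - ε) := hferrK r (Ioo_subset_Icc_self hr)
    _ ≤ K ^ (1 - δ) := rpow_le_rpow_of_exponent_le hK (by linarith)
end
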